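/- Harish-Chandra/Itzykson–Zuber formula: for each n ≥ 1 there exists a constant c_n > 0, depending only on n, with the following property. Let A be a normal n×n complex matrix with distinct eigenvalues a_1, …, a_n, let μ be the Haar probability measure on the unitary group U(n), and let f : ℝ^n → ℂ be a continuous compactly supported function that is symmetric under permutations of its arguments. Then ∫_{U(n)} ∫_{ℝ^n} exp{ −(1/2) tr (A − U* B U)² } Δ(B)² f(b_1,…,b_n) db dμ(U) = c_n ∫_{ℝ^n} exp{ −(1/2) Σ_{j=1}^n (a_j − b_j)² } (Δ(B)/Δ(A)) f(b_1,…,b_n) db, where B = diag(b_1,…,b_n), Δ(B) = ∏_{i<j}(b_j − b_i) and Δ(A) = ∏_{i<j}(a_j − a_i). -/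

import Mathlib

open MeasureTheory

noncomputable section

/-- The Borel σ-algebra on complex matrices. -/
instance matrixMeasurableSpace (n : ℕ) : MeasurableSpace (Matrix (Fin n) (Fin n) ℂ) :=
  borel _

/-- The Vandermonde determinant `Δ(x₁,…,x_n) = ∏_{i<j} (x_j − x_i)`. -/
def vdmC {n : ℕ} (x : Fin n → ℂ) : ℂ := ∏ i, ∏ j ∈ Finset.Ioi i, (x j - x i)

/-!
Fix `b`. The functions `a ↦ Δ(a) ∫ exp (tr (diag(a) U* diag(b) U)) dμ(U)` and
`a ↦ det (exp (b_i a_j))` are both alternating, and both are eigenfunctions, with the same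
eigenvalues `e(b)`, of the operators `e(∂)` for `e` an elementary symmetric polynomial. For the
first one this is Harish-Chandra's argument: on conjugation-invariant functions, multiplication by
`Δ` turns the radial part of the matrix Laplacian into the flat Laplacian, and iterated commutators
with the Laplacian carry this over from multiplication by invariant polynomials to the invariant
differential operators.

An alternating power series with these eigenvalues is determined by its coefficient at
`x^δ = ∏ x_i^i`. Indeed, if that coefficient vanishes, then the lowest nonzero homogeneous component
is killed by all `e(∂)`, hence by `∂_i^n` because `X_i^n` lies in the ideal of the `e`; so its
exponents are less than `n`, and an alternating polynomial of this kind is a multiple of `Δ`.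

Comparing the coefficients at `x^δ` gives `Δ(a) Δ(b) ∫ exp (tr (diag(a) U* diag(b) U)) dμ(U) =
∏_{i<n} i! · det (exp (b_i a_j))`. The Gaussian weight only adds factors invariant under
conjugation, and integrating the determinant against the alternating function `Δ(b) f(b)`
contributes a factor `n!`.
-/

open MvPolynomial

section HomogeneousInduction

variable {σ R : Type*} [CommSemiring R]

theorem exists_monomial_eq_X_mul {s : σ →₀ ℕ} {k : ℕ} (hs : s.degree = k + 1) (r : R) :
    ∃ (i : σ) (t : σ →₀ ℕ), t.degree = k ∧ monomial s r = X i * monomial t r := by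
  obtain ⟨i, hi⟩ : ∃ i, s i ≠ 0 := by
    by_contra! h
    obtain rfl : s = 0 := Finsupp.ext h
    simp at hs
  have hst : Finsupp.single i 1 + (s - Finsupp.single i 1) = s :=
    add_tsub_cancel_of_le (Finsupp.single_le_iff.2 (Nat.one_le_iff_ne_zero.2 hi))
  refine ⟨i, s - Finsupp.single i 1, ?_, ?_⟩
  · rw [← hst, map_add, Finsupp.degree_single] at hs
    omega
  · rw [X, monomial_mul, one_mul, hst]

theorem isHomogeneous_induction {motive : ℕ → MvPolynomial σ R → Prop}
    (zero : ∀ k, motive k 0) (C : ∀ r, motive 0 (C r))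
    (add : ∀ k p q, motive k p → motive k q → motive k (p + q))
    (X_mul : ∀ k i p, motive k p → motive (k + 1) (X i * p))
    {k : ℕ} {p : MvPolynomial σ R} (hp : p.IsHomogeneous k) : motive k p := by
  have hmonomial : ∀ (k : ℕ) (s : σ →₀ ℕ) (r : R), s.degree = k → motive k (monomial s r) := by
    intro k
    induction k with
    | zero =>
      intro s r hs
      obtain rfl : s = 0 := (Finsupp.degree_eq_zero_iff s).1 hs
      exact C r
    | succ k ih =>
      intro s r hs
      obtain ⟨i, t, ht, h⟩ := exists_monomial_eq_X_mul hs r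
      exact h ▸ X_mul k i _ (ih t r ht)
  rw [p.as_sum]
  refine Finset.sum_induction _ _ (add k) (zero k) fun s hs => hmonomial k s _ ?_
  rw [Finsupp.degree_eq_weight_one]
  exact hp (mem_support_iff.1 hs)

end HomogeneousInduction

section InnerDerivation

variable {R A : Type*} [CommRing R] [Ring A] [Algebra R A]

variable (R) in
/-- The inner derivation `[a, ·]` of an associative algebra, as an endomorphism that can be
iterated. -/
def innerDerivation (a : A) : Module.End R A := LinearMap.mulLeft R a - LinearMap.mulRight R a

theorem innerDerivation_apply (a t : A) : innerDerivation R a t = a * t - t * a := rfl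

theorem innerDerivation_mul (a s t : A) :
    innerDerivation R a (s * t) = innerDerivation R a s * t + s * innerDerivation R a t := by
  simp only [innerDerivation_apply]
  noncomm_ring

theorem innerDerivation_pow_succ_mul {a s : A}
    (hs : innerDerivation R a (innerDerivation R a s) = 0) (t : A) (k : ℕ) :
    (innerDerivation R a ^ (k + 1)) (s * t) =
      s * (innerDerivation R a ^ (k + 1)) t +
        (k + 1) • (innerDerivation R a s * (innerDerivation R a ^ k) t) := by
  induction k with
  | zero => simp [innerDerivation_mul, add_comm]
  | succ k ih =>
    rw [pow_succ', Module.End.mul_apply, ih, map_add, map_nsmul, innerDerivation_mul,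
      innerDerivation_mul, hs, zero_mul, zero_add, ← Module.End.mul_apply,
      ← Module.End.mul_apply, ← pow_succ', ← pow_succ']
    module

end InnerDerivation

section ConstantCoefficientOperators

variable {σ R : Type*} [CommRing R]

theorem pderiv_pderiv_comm (i j : σ) (p : MvPolynomial σ R) :
    pderiv i (pderiv j p) = pderiv j (pderiv i p) := by
  classical
  have h : ⁅pderiv (R := R) i, pderiv (R := R) j⁆ = 0 := by
    refine derivation_ext fun k => ?_
    simp only [Derivation.commutator_apply, pderiv_X, Pi.single_apply]
    split_ifs <;> simp
  simpa [Derivation.commutator_apply, sub_eq_zero] using DFunLike.congr_fun h p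

open scoped IsMulCommutative in
/-- The constant coefficient differential operator `q(∂)`, obtained from the polynomial `q` by
substituting `∂/∂x_i` for `x_i`. -/
def diffOp : MvPolynomial σ R →ₐ[R] Module.End R (MvPolynomial σ R) :=
  have hcomm := Algebra.isMulCommutative_adjoin R
    (s := Set.range fun i : σ => ((pderiv i).toLinearMap : Module.End R (MvPolynomial σ R))) (by
      rintro _ ⟨i, rfl⟩ _ ⟨j, rfl⟩
      exact LinearMap.ext fun p => pderiv_pderiv_comm i j p)
  (Algebra.adjoin R (Set.range fun i : σ => (pderiv i).toLinearMap)).val.comp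
    (aeval fun i => ⟨(pderiv i).toLinearMap, Algebra.subset_adjoin ⟨i, rfl⟩⟩)

@[simp] theorem diffOp_X_apply (i : σ) (f : MvPolynomial σ R) :
    diffOp (X i) f = pderiv i f := by
  simp [diffOp]

@[simp] theorem diffOp_C (r : R) : diffOp (C r : MvPolynomial σ R) = r • 1 := by
  rw [← algebraMap_eq, AlgHom.commutes, Algebra.algebraMap_eq_smul_one]

theorem diffOp_mul_apply (p q f : MvPolynomial σ R) :
    diffOp (p * q) f = diffOp p (diffOp q f) := by
  rw [map_mul, Module.End.mul_apply]

theorem diffOp_X_mul (q f : MvPolynomial σ R) (i : σ) :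
    diffOp q (X i * f) = X i * diffOp q f + diffOp (pderiv i q) f := by
  induction q using MvPolynomial.induction_on generalizing f with
  | C r => simp
  | add p q hp hq =>
    simp only [map_add, LinearMap.add_apply, hp, hq]
    ring
  | mul_X q j hq =>
    have hX : diffOp (pderiv i (X j)) f = pderiv j (X i) * f := by
      by_cases hij : i = j
      · simp [hij]
      · simp [hij, Ne.symm hij]
    rw [diffOp_mul_apply, diffOp_mul_apply, diffOp_X_apply, diffOp_X_apply, pderiv_mul, map_add,
      ← hX, hq, Derivation.leibniz, map_add, smul_eq_mul, smul_eq_mul, LinearMap.add_apply,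
      diffOp_mul_apply, mul_comm (X j), diffOp_mul_apply, diffOp_X_apply]
    ring

theorem innerDerivation_diffOp_lmul_X (q : MvPolynomial σ R) (i : σ) :
    innerDerivation R (diffOp q) (Algebra.lmul R _ (X i)) = diffOp (pderiv i q) := by
  refine LinearMap.ext fun f => ?_
  simp [innerDerivation_apply, diffOp_X_mul]

theorem innerDerivation_diffOp_diffOp (q p : MvPolynomial σ R) :
    innerDerivation R (diffOp q) (diffOp p) = 0 := by
  rw [innerDerivation_apply, sub_eq_zero, ← map_mul, ← map_mul, mul_comm]

/-- By `diffOp_X_mul` each commutator with `q(∂)` trades one factor `x_i` of `p` for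
`(∂_i q)(∂)`. -/
theorem innerDerivation_diffOp_pow_lmul (q : MvPolynomial σ R) {k : ℕ} {p : MvPolynomial σ R}
    (hp : p.IsHomogeneous k) :
    (innerDerivation R (diffOp q) ^ k) (Algebra.lmul R _ p) =
      k.factorial • diffOp (aeval (fun i => pderiv i q) p) := by
  refine isHomogeneous_induction (motive := fun k p =>
    (innerDerivation R (diffOp q) ^ k) (Algebra.lmul R _ p) =
      k.factorial • diffOp (aeval (fun i => pderiv i q) p))
    (fun k => ?zero) (fun r => ?C) (fun k p₁ p₂ h₁ h₂ => ?add) (fun k i p h => ?X_mul) hp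
  case zero => simp only [map_zero, smul_zero]
  case C => exact LinearMap.ext fun f => by simp [algebraMap_eq]
  case add => simp only [map_add, h₁, h₂, smul_add]
  case X_mul =>
    have hX : innerDerivation R (diffOp q)
        (innerDerivation R (diffOp q) (Algebra.lmul R _ (X i))) = 0 := by
      rw [innerDerivation_diffOp_lmul_X, innerDerivation_diffOp_diffOp]
    rw [map_mul, innerDerivation_pow_succ_mul hX, innerDerivation_diffOp_lmul_X, pow_succ',
      Module.End.mul_apply, h, map_nsmul, innerDerivation_diffOp_diffOp, map_mul, aeval_X,
      map_mul, Nat.factorial_succ, smul_zero, mul_zero, zero_add, mul_smul_comm, mul_smul]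

end ConstantCoefficientOperators

section Laplacian

variable {σ R : Type*} [CommRing R]

theorem aeval_smul_of_isHomogeneous {S : Type*} [CommRing S] [Algebra R S] (c : R) (g : σ → S)
    {k : ℕ} {p : MvPolynomial σ R} (hp : p.IsHomogeneous k) :
    aeval (fun i => c • g i) p = c ^ k • aeval g p := by
  refine isHomogeneous_induction
    (motive := fun k p => aeval (fun i => c • g i) p = c ^ k • aeval g p)
    (fun k => ?zero) (fun r => ?C) (fun k p₁ p₂ h₁ h₂ => ?add) (fun k i p h => ?X_mul) hp
  case zero => simp
  case C => simp
  case add => simp only [map_add, h₁, h₂, smul_add]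
  case X_mul => rw [map_mul, map_mul, h, aeval_X, aeval_X, smul_mul_smul_comm, pow_succ']

variable [Fintype σ]

variable (R) in
/-- The twisted Laplacian `∑ ∂_i ∂_{τ i}`; on functions of a matrix, `τ = Prod.swap` gives the
Laplacian of the trace form `tr (A ^ 2)`. -/
def laplacian (τ : σ → σ) : Module.End R (MvPolynomial σ R) := diffOp (∑ i, X i * X (τ i))

theorem laplacian_apply (τ : σ → σ) (f : MvPolynomial σ R) :
    laplacian R τ f = ∑ i, pderiv i (pderiv (τ i) f) := by
  simp only [laplacian, map_sum, LinearMap.sum_apply, diffOp_mul_apply, diffOp_X_apply]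

theorem laplacian_rename (π : Equiv.Perm σ) (f : MvPolynomial σ R) :
    laplacian R id (rename π f) = rename π (laplacian R id f) := by
  simp only [laplacian_apply, id, map_sum]
  rw [← Equiv.sum_comp π]
  exact Finset.sum_congr rfl fun i _ => by rw [pderiv_rename π.injective, pderiv_rename π.injective]

theorem laplacian_mul (τ : σ → σ) (f g : MvPolynomial σ R) :
    laplacian R τ (f * g) = laplacian R τ f * g + f * laplacian R τ g +
      ∑ i, (pderiv (τ i) f * pderiv i g + pderiv i f * pderiv (τ i) g) := by
  simp only [laplacian_apply, pderiv_mul, map_add, Finset.sum_mul, Finset.mul_sum,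
    ← Finset.sum_add_distrib]
  exact Finset.sum_congr rfl fun i _ => by ring

theorem pderiv_sum_X_mul_X {τ : σ → σ} (hτ : Function.Involutive τ) (i : σ) :
    pderiv i (∑ j, X j * X (τ j) : MvPolynomial σ R) = (2 : R) • X (τ i) := by
  classical
  have hswap : ∀ j, τ j = i ↔ j = τ i := fun j =>
    ⟨fun h => by rw [← h, hτ], fun h => by rw [h, hτ]⟩
  simp [pderiv_X, Pi.single_apply, Finset.sum_add_distrib, hswap, two_smul]

theorem laplacian_X_mul {τ : σ → σ} (hτ : Function.Involutive τ) (i : σ) (f : MvPolynomial σ R) :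
    laplacian R τ (X i * f) = X i * laplacian R τ f + 2 * pderiv (τ i) f := by
  rw [laplacian, diffOp_X_mul, pderiv_sum_X_mul_X hτ, map_smul, LinearMap.smul_apply,
    diffOp_X_apply, two_smul, two_mul]

theorem laplacian_pderiv (τ : σ → σ) (i : σ) (f : MvPolynomial σ R) :
    laplacian R τ (pderiv i f) = pderiv i (laplacian R τ f) := by
  rw [laplacian, ← diffOp_X_apply, ← diffOp_X_apply, ← diffOp_mul_apply, mul_comm,
    diffOp_mul_apply]

theorem innerDerivation_laplacian_pow_lmul {τ : σ → σ} (hτ : Function.Involutive τ) {k : ℕ}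
    {p : MvPolynomial σ R} (hp : p.IsHomogeneous k) :
    (innerDerivation R (laplacian R τ) ^ k) (Algebra.lmul R _ p) =
      (2 ^ k * k.factorial) • diffOp (rename τ p) := by
  have hrename : aeval (fun i => (2 : R) • X (τ i)) p = (2 : R) ^ k • rename τ p := by
    rw [rename_eq_aeval]
    exact aeval_smul_of_isHomogeneous 2 (X ∘ τ) hp
  rw [laplacian, innerDerivation_diffOp_pow_lmul _ hp]
  simp only [pderiv_sum_X_mul_X hτ, hrename, map_smul, ← Nat.cast_smul_eq_nsmul R, smul_smul]
  push_cast
  rw [mul_comm]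

end Laplacian

section Exponential

variable {σ 𝕜 : Type*} [Fintype σ] [Field 𝕜]

/-- The homogeneous component of degree `m` of the exponential series `exp (∑ c_i x_i)`. -/
def expPart (c : σ → 𝕜) (m : ℕ) : MvPolynomial σ 𝕜 :=
  (m.factorial : 𝕜)⁻¹ • (∑ i, c i • X i) ^ m

theorem eval_expPart (c x : σ → 𝕜) (m : ℕ) :
    eval x (expPart c m) = (m.factorial : 𝕜)⁻¹ * (∑ i, c i * x i) ^ m := by
  simp [expPart, smul_eval]

theorem isHomogeneous_expPart (c : σ → 𝕜) (m : ℕ) : (expPart c m).IsHomogeneous m := by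
  have hlinear : (∑ i, c i • X i : MvPolynomial σ 𝕜).IsHomogeneous 1 :=
    IsHomogeneous.sum _ _ _ fun i _ =>
      (homogeneousSubmodule σ 𝕜 1).smul_mem _ (isHomogeneous_X 𝕜 i)
  have hpow := hlinear.pow m
  rw [one_mul] at hpow
  exact (homogeneousSubmodule σ 𝕜 m).smul_mem _ hpow

theorem pderiv_expPart_zero (c : σ → 𝕜) (i : σ) : pderiv i (expPart c 0) = 0 := by
  simp [expPart]

variable [CharZero 𝕜]

theorem coeff_expPart (c : σ → 𝕜) (m : ℕ) (s : σ →₀ ℕ) :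
    coeff s (expPart c m) = if s.degree = m then ∏ i, c i ^ s i / (s i).factorial else 0 := by
  have hdegree : (s.sum fun _ k => k) = s.degree := rfl
  rw [expPart, coeff_smul, coeff_linearCombination_X_pow_of_fintype, hdegree]
  split_ifs with hs
  · have hmultinomial : (∏ i, ((s i).factorial : 𝕜)) * s.multinomial = m.factorial := by
      rw [← Finsupp.multinomial_of_support_subset s.support.subset_univ, ← hs,
        Finsupp.degree_eq_sum, ← Nat.multinomial_spec]
      push_cast
      rfl
    have hprod : ∏ i, ((s i).factorial : 𝕜) ≠ 0 :=
      Finset.prod_ne_zero_iff.2 fun i _ => Nat.cast_ne_zero.2 (s i).factorial_ne_zero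
    rw [Finsupp.prod_fintype _ _ fun i => pow_zero _, Finset.prod_div_distrib, eq_div_iff hprod,
      smul_eq_mul, mul_assoc, inv_mul_eq_iff_eq_mul₀ (Nat.cast_ne_zero.2 m.factorial_ne_zero)]
    linear_combination (∏ i, c i ^ s i) * hmultinomial
  · exact smul_zero _

theorem pderiv_expPart_succ (c : σ → 𝕜) (i : σ) (m : ℕ) :
    pderiv i (expPart c (m + 1)) = c i • expPart c m := by
  classical
  have hlinear : pderiv i (∑ j, c j • X j : MvPolynomial σ 𝕜) = c i • 1 := by
    simp [pderiv_X, Pi.single_apply]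
  have hfactorial : ((m + 1).factorial : 𝕜)⁻¹ * (m + 1 : ℕ) = (m.factorial : 𝕜)⁻¹ := by
    rw [Nat.factorial_succ]
    push_cast
    have : (m : 𝕜) + 1 ≠ 0 := m.cast_add_one_ne_zero
    field_simp
  rw [expPart, Derivation.map_smul, Derivation.leibniz_pow, hlinear, Nat.add_sub_cancel,
    ← Nat.cast_smul_eq_nsmul 𝕜, smul_smul, hfactorial, expPart, smul_eq_mul, mul_smul_comm,
    mul_one, smul_comm]

/-- Homogeneous components of negative degree are zero, which is why the case distinction
appears. -/
theorem diffOp_expPart (c : σ → 𝕜) {k : ℕ} {p : MvPolynomial σ 𝕜} (hp : p.IsHomogeneous k)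
    (m : ℕ) :
    diffOp p (expPart c m) = if k ≤ m then eval c p • expPart c (m - k) else 0 := by
  refine isHomogeneous_induction (motive := fun k p => ∀ m, diffOp p (expPart c m) =
      if k ≤ m then eval c p • expPart c (m - k) else 0)
    (fun k m => ?zero) (fun r m => ?C) (fun k p₁ p₂ h₁ h₂ m => ?add) (fun k i p h m => ?X_mul) hp m
  case zero => simp
  case C => simp
  case add =>
    rw [map_add, LinearMap.add_apply, h₁, h₂, map_add, add_smul]
    split_ifs <;> simp
  case X_mul =>
    rw [mul_comm, diffOp_mul_apply, diffOp_X_apply]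
    cases m with
    | zero => simp [pderiv_expPart_zero]
    | succ m => simp [pderiv_expPart_succ, h, smul_smul, mul_comm]

end Exponential

section Alternating

variable {σ R : Type*} [Fintype σ] [DecidableEq σ] [CommRing R]

/-- Polynomials which a permutation of the variables multiplies by its signature. -/
def IsAlternating (q : MvPolynomial σ R) : Prop :=
  ∀ π : Equiv.Perm σ, rename π q = (Equiv.Perm.sign π : ℤ) • q

theorem IsAlternating.sub {p q : MvPolynomial σ R} (hp : IsAlternating p)
    (hq : IsAlternating q) : IsAlternating (p - q) := fun π => by
  rw [map_sub, hp π, hq π, smul_sub]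

theorem IsAlternating.smul {p : MvPolynomial σ R} (hp : IsAlternating p) (c : R) :
    IsAlternating (c • p) := fun π => by
  rw [map_smul, hp π, smul_comm]

theorem IsAlternating.mul_of_rename_eq {p q : MvPolynomial σ R} (hp : IsAlternating p)
    (hq : ∀ π : Equiv.Perm σ, rename π q = q) : IsAlternating (p * q) := fun π => by
  rw [map_mul, hp π, hq π, smul_mul_assoc]

theorem IsAlternating.laplacian {q : MvPolynomial σ R} (hq : IsAlternating q) :
    IsAlternating (laplacian R id q) := fun π => by
  rw [← laplacian_rename, hq π, map_zsmul]

theorem IsAlternating.coeff_eq_sign_mul {q : MvPolynomial σ R} (hq : IsAlternating q)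
    (π : Equiv.Perm σ) (s : σ →₀ ℕ) :
    coeff s q = (Equiv.Perm.sign π : ℤ) • coeff (s.mapDomain π) q := by
  rw [← coeff_rename_mapDomain π π.injective, hq π, coeff_smul]

theorem IsAlternating.coeff_eq_zero_of_eq [NoZeroDivisors R] [CharZero R]
    {q : MvPolynomial σ R} (hq : IsAlternating q) {s : σ →₀ ℕ} {i j : σ} (hij : i ≠ j)
    (hs : s i = s j) : coeff s q = 0 := by
  have hswap : s.mapDomain (Equiv.swap i j) = s := by
    refine Finsupp.ext fun k => ?_
    rw [← Finsupp.equivMapDomain_eq_mapDomain, Finsupp.equivMapDomain_apply, Equiv.symm_swap]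
    rcases eq_or_ne k i with rfl | hki
    · rw [Equiv.swap_apply_left, hs]
    rcases eq_or_ne k j with rfl | hkj
    · rw [Equiv.swap_apply_right, hs]
    rw [Equiv.swap_apply_of_ne_of_ne hki hkj]
  have h := hq.coeff_eq_sign_mul (Equiv.swap i j) s
  rw [hswap, Equiv.Perm.sign_swap hij, Units.val_neg, Units.val_one, neg_one_zsmul] at h
  exact self_eq_neg.1 h

end Alternating

section Vandermonde

variable {n : ℕ} {R : Type*} [CommRing R]

/-- The exponent `(0, 1, …, n - 1)` of the leading monomial of the Vandermonde polynomial. -/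
def delta (n : ℕ) : Fin n →₀ ℕ := Finsupp.equivFunOnFinite.symm fun i => (i : ℕ)

@[simp] theorem delta_apply (i : Fin n) : delta n i = i := rfl

theorem mapDomain_delta_apply (π : Equiv.Perm (Fin n)) (i : Fin n) :
    (delta n).mapDomain π (π i) = i := by
  rw [Finsupp.mapDomain_apply π.injective, delta_apply]

theorem mapDomain_delta_eq_delta_iff {π : Equiv.Perm (Fin n)} :
    (delta n).mapDomain π = delta n ↔ π = 1 := by
  refine ⟨fun h => Equiv.ext fun i => Fin.ext ?_, fun h => by simp [h, Finsupp.mapDomain_id]⟩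
  rw [← delta_apply (π i), ← h, mapDomain_delta_apply, Equiv.Perm.one_apply]

variable (R n) in
/-- The Vandermonde determinant as a polynomial in the variables `x_1, …, x_n`. -/
def vandermondePoly : MvPolynomial (Fin n) R := ∏ i, ∏ j ∈ Finset.Ioi i, (X j - X i)

theorem vandermondePoly_eq_det :
    vandermondePoly n R = (Matrix.vandermonde (X : Fin n → MvPolynomial (Fin n) R)).det :=
  (Matrix.det_vandermonde _).symm

theorem isAlternating_vandermondePoly : IsAlternating (vandermondePoly n R) := fun π => by
  rw [vandermondePoly_eq_det, zsmul_eq_mul, ← Matrix.det_permute, AlgHom.map_det]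
  congr 1
  ext i j
  simp [Matrix.vandermonde_apply]

theorem vandermondePoly_eq_sum_monomial : vandermondePoly n R = ∑ π : Equiv.Perm (Fin n),
    monomial ((delta n).mapDomain π) ((Equiv.Perm.sign π : ℤ) : R) := by
  rw [vandermondePoly_eq_det, Matrix.det_apply]
  refine Finset.sum_congr rfl fun π _ => ?_
  rw [monomial_eq, Units.smul_def, zsmul_eq_mul, map_intCast,
    Finsupp.prod_fintype _ _ fun i => pow_zero _, ← Equiv.prod_comp π fun i => X i ^ _]
  simp only [Matrix.vandermonde_apply, mapDomain_delta_apply]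

theorem coeff_vandermondePoly_of_le {s : Fin n →₀ ℕ} {i : Fin n} (hi : n ≤ s i) :
    coeff s (vandermondePoly n R) = 0 := by
  rw [vandermondePoly_eq_sum_monomial, coeff_sum]
  refine Finset.sum_eq_zero fun π _ => ?_
  rw [coeff_monomial, if_neg]
  rintro rfl
  obtain ⟨j, rfl⟩ := π.surjective i
  rw [mapDomain_delta_apply] at hi
  omega

theorem coeff_delta_vandermondePoly : coeff (delta n) (vandermondePoly n R) = 1 := by
  rw [vandermondePoly_eq_sum_monomial, coeff_sum, Finset.sum_eq_single 1]
  · simp [Finsupp.mapDomain_id]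
  · exact fun π _ hπ => by rw [coeff_monomial, if_neg (mt mapDomain_delta_eq_delta_iff.1 hπ)]
  · simp

theorem isHomogeneous_vandermondePoly :
    (vandermondePoly n R).IsHomogeneous (delta n).degree := by
  rw [vandermondePoly_eq_sum_monomial]
  refine IsHomogeneous.sum _ _ _ fun π _ => isHomogeneous_monomial _ ?_
  rw [Finsupp.degree_eq_sum, Finsupp.degree_eq_sum, ← Equiv.sum_comp π]
  exact Finset.sum_congr rfl fun i _ => Finsupp.mapDomain_apply π.injective _ _

variable [NoZeroDivisors R] [CharZero R]

theorem IsAlternating.eq_zero {q : MvPolynomial (Fin n) R} (hq : IsAlternating q)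
    (hdeg : ∀ (s : Fin n →₀ ℕ) (i : Fin n), n ≤ s i → coeff s q = 0)
    (hδ : coeff (delta n) q = 0) : q = 0 := by
  refine MvPolynomial.ext _ _ fun s => ?_
  rw [coeff_zero]
  by_cases hlt : ∀ i, s i < n
  · by_cases hinj : Function.Injective s
    · have hinj' : Function.Injective fun i => (⟨s i, hlt i⟩ : Fin n) :=
        fun i j h => hinj (Fin.mk.inj h)
      let π : Equiv.Perm (Fin n) := Equiv.ofBijective _ (Finite.injective_iff_bijective.1 hinj')
      have hπ : s.mapDomain π = delta n := by
        refine Finsupp.ext fun i => ?_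
        obtain ⟨j, rfl⟩ := π.surjective i
        rw [Finsupp.mapDomain_apply π.injective]
        rfl
      rw [hq.coeff_eq_sign_mul π, hπ, hδ, smul_zero]
    · obtain ⟨i, j, hij, hne⟩ := Function.not_injective_iff.1 hinj
      exact hq.coeff_eq_zero_of_eq hne hij
  · push Not at hlt
    obtain ⟨i, hi⟩ := hlt
    exact hdeg s i hi

theorem laplacian_vandermondePoly : laplacian R id (vandermondePoly n R) = 0 := by
  have hcoeff : ∀ s, coeff s (laplacian R id (vandermondePoly n R)) = ∑ i, coeff
      (s + Finsupp.single i 1 + Finsupp.single i 1) (vandermondePoly n R) *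
        ((s i : R) + 1 + 1) * ((s i : R) + 1) := fun s => by
    simp [laplacian_apply, coeff_sum, coeff_pderiv]
  refine isAlternating_vandermondePoly.laplacian.eq_zero (fun s i hi => ?_) ?_
  · refine (hcoeff s).trans (Finset.sum_eq_zero fun j _ => ?_)
    rw [coeff_vandermondePoly_of_le (i := i), zero_mul, zero_mul]
    simp only [Finsupp.add_apply]
    omega
  · refine (hcoeff _).trans (Finset.sum_eq_zero fun j _ => ?_)
    rw [isHomogeneous_vandermondePoly.coeff_eq_zero, zero_mul, zero_mul]
    rw [map_add, map_add, Finsupp.degree_single]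
    omega

end Vandermonde

section CoefficientsOfDerivatives

variable {σ R : Type*} [CommRing R]

theorem coeff_diffOp_X_pow (i : σ) (k : ℕ) (q : MvPolynomial σ R) (s : σ →₀ ℕ) :
    coeff s (diffOp (X i ^ k) q) =
      (s i + 1).ascFactorial k * coeff (s + Finsupp.single i k) q := by
  induction k generalizing s with
  | zero => simp
  | succ k ih =>
    have hfactorial :
        (s i + 1) * (s i + 1 + 1).ascFactorial k = (s i + 1).ascFactorial (k + 1) := by
      rw [Nat.succ_ascFactorial, Nat.ascFactorial_succ]
    rw [pow_succ', diffOp_mul_apply, diffOp_X_apply, coeff_pderiv, ih, add_assoc,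
      ← Finsupp.single_add, add_comm 1 k, ← hfactorial]
    simp only [Finsupp.add_apply, Finsupp.single_eq_same]
    push_cast
    ring

theorem coeff_eq_zero_of_diffOp_X_pow_eq_zero [NoZeroDivisors R] [CharZero R] {i : σ} {k : ℕ}
    {q : MvPolynomial σ R} (h : diffOp (X i ^ k) q = 0) {s : σ →₀ ℕ} (hs : k ≤ s i) :
    coeff s q = 0 := by
  have hcoeff := coeff_diffOp_X_pow i k q (s - Finsupp.single i k)
  rw [h, coeff_zero, tsub_add_cancel_of_le (Finsupp.single_le_iff.2 hs)] at hcoeff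
  exact (mul_eq_zero.1 hcoeff.symm).resolve_left
    (Nat.cast_ne_zero.2 (Nat.ascFactorial_pos _ _).ne')

end CoefficientsOfDerivatives

section DiagonalRestriction

variable {ι R : Type*} [DecidableEq ι] [CommRing R]

/-- Restriction of a polynomial function of a matrix to diagonal matrices. -/
def resDiag : MvPolynomial (ι × ι) R →ₐ[R] MvPolynomial ι R :=
  aeval fun p => Matrix.diagonal X p.1 p.2

@[simp] theorem resDiag_X (p : ι × ι) :
    resDiag (X p : MvPolynomial (ι × ι) R) = Matrix.diagonal X p.1 p.2 :=
  aeval_X _ _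

theorem eval_resDiag (a : ι → R) (ψ : MvPolynomial (ι × ι) R) :
    eval a (resDiag ψ) = eval (fun p => Matrix.diagonal a p.1 p.2) ψ := by
  induction ψ using MvPolynomial.induction_on with
  | C c => simp [resDiag]
  | add p q hp hq => simp only [map_add, hp, hq]
  | mul_X p k hp =>
    rw [map_mul, map_mul, map_mul, hp, eval_X, resDiag_X, Matrix.diagonal_apply,
      Matrix.diagonal_apply]
    split_ifs <;> simp

theorem isHomogeneous_resDiag {p : MvPolynomial (ι × ι) R} {k : ℕ} (hp : p.IsHomogeneous k) :
    (resDiag p).IsHomogeneous k := by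
  rw [← one_mul k]
  refine hp.aeval _ fun i => ?_
  rw [Matrix.diagonal_apply]
  split_ifs
  · exact isHomogeneous_X _ _
  · exact isHomogeneous_zero _ _ _

theorem pderiv_resDiag (i : ι) (ψ : MvPolynomial (ι × ι) R) :
    pderiv i (resDiag ψ) = resDiag (pderiv (i, i) ψ) := by
  induction ψ using MvPolynomial.induction_on with
  | C c => simp [resDiag]
  | add p q hp hq => simp only [map_add, hp, hq]
  | mul_X p k hp =>
    obtain ⟨k, l⟩ := k
    have hX : pderiv i (resDiag (X (k, l) : MvPolynomial (ι × ι) R)) =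
        resDiag (pderiv (i, i) (X (k, l))) := by
      rcases eq_or_ne k l with rfl | hkl
      · rcases eq_or_ne k i with rfl | hki
        · simp
        · simp [hki]
      · have : (k, l) ≠ (i, i) := fun h => hkl (by simp_all)
        simp [pderiv_X_of_ne this, Matrix.diagonal_apply_ne _ hkl]
    rw [map_mul, pderiv_mul, pderiv_mul, map_add, map_mul, map_mul, hp, hX]

end DiagonalRestriction

section ConjugationInvariants

variable {ι R : Type*} [Fintype ι] [CommRing R]

/-- The derivation of polynomial functions of a matrix `A` given by the vector field
`[E_{ij}, A]`. -/
def conjDeriv (i j : ι) : Derivation R (MvPolynomial (ι × ι) R) (MvPolynomial (ι × ι) R) :=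
  ∑ l, ((X (j, l) : MvPolynomial (ι × ι) R) • pderiv (i, l) -
    (X (l, i) : MvPolynomial (ι × ι) R) • pderiv (l, j))

theorem conjDeriv_apply (i j : ι) (ψ : MvPolynomial (ι × ι) R) :
    conjDeriv i j ψ = ∑ l, (X (j, l) * pderiv (i, l) ψ - X (l, i) * pderiv (l, j) ψ) := by
  rw [conjDeriv, ← Derivation.coeFnAddMonoidHom_apply, map_sum, Finset.sum_apply]
  rfl

/-- Infinitesimal invariance of a polynomial function of a matrix under conjugation. -/
def IsConjInv (ψ : MvPolynomial (ι × ι) R) : Prop := ∀ i j, conjDeriv i j ψ = 0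

theorem IsConjInv.mul {p q : MvPolynomial (ι × ι) R} (hp : IsConjInv p)
    (hq : IsConjInv q) : IsConjInv (p * q) := fun i j => by
  rw [Derivation.leibniz, hp, hq, smul_zero, smul_zero, add_zero]

theorem IsConjInv.sub {p q : MvPolynomial (ι × ι) R} (hp : IsConjInv p)
    (hq : IsConjInv q) : IsConjInv (p - q) := fun i j => by
  rw [map_sub, hp, hq, sub_zero]

theorem conjDeriv_laplacian (i j : ι) (ψ : MvPolynomial (ι × ι) R) :
    conjDeriv i j (laplacian R Prod.swap ψ) = laplacian R Prod.swap (conjDeriv i j ψ) := by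
  rw [conjDeriv_apply, conjDeriv_apply, map_sum]
  refine Finset.sum_congr rfl fun l _ => ?_
  rw [map_sub, laplacian_X_mul Prod.swap_swap, laplacian_X_mul Prod.swap_swap, laplacian_pderiv,
    laplacian_pderiv, Prod.swap_prod_mk, Prod.swap_prod_mk, pderiv_pderiv_comm (l, j)]
  ring

theorem IsConjInv.laplacian {p : MvPolynomial (ι × ι) R} (hp : IsConjInv p) :
    IsConjInv (laplacian R Prod.swap p) := fun i j => by
  rw [conjDeriv_laplacian, hp, map_zero]

/-- Obtained by differentiating `conjDeriv i j ψ = 0` in direction `E_{ji}` at a diagonal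
matrix. -/
theorem IsConjInv.X_sub_X_mul_resDiag [DecidableEq ι] {ψ : MvPolynomial (ι × ι) R}
    (hψ : IsConjInv ψ) (i j : ι) :
    (X i - X j) * resDiag (pderiv (i, j) (pderiv (j, i) ψ)) =
      pderiv i (resDiag ψ) - pderiv j (resDiag ψ) := by
  have h := congrArg (fun q => resDiag (pderiv (j, i) q)) (hψ i j)
  simp only [conjDeriv_apply, map_sum, map_sub, map_zero, pderiv_mul, map_add, map_mul, resDiag_X,
    pderiv_X, Pi.single_apply, Prod.mk.injEq, Matrix.diagonal_apply, true_and, and_true,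
    Finset.sum_sub_distrib, Finset.sum_add_distrib, map_zero, ite_mul,
    one_mul, zero_mul, Finset.sum_ite_eq, Finset.sum_ite_eq', Finset.mem_univ, if_true] at h
  rw [pderiv_resDiag, pderiv_resDiag, pderiv_pderiv_comm]
  linear_combination -h

end ConjugationInvariants

section RadialPart

variable {n : ℕ} {R : Type*} [CommRing R]

theorem derivation_prod_of_eq_mul {κ A : Type*} [CommRing A] [Algebra R A] (D : Derivation R A A)
    {s : Finset κ} {p g : κ → A} (h : ∀ i ∈ s, D (p i) = p i * g i) :
    D (∏ i ∈ s, p i) = (∏ i ∈ s, p i) * ∑ i ∈ s, g i := by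
  classical
  induction s using Finset.induction_on with
  | empty => simp
  | insert i s hi ih =>
    rw [Finset.prod_insert hi, Finset.sum_insert hi, Derivation.leibniz, smul_eq_mul, smul_eq_mul,
      ih fun j hj => h j (Finset.mem_insert_of_mem hj), h i (Finset.mem_insert_self i s)]
    ring

theorem sum_pderiv_vandermondePoly_mul {f : MvPolynomial (Fin n) R}
    {g : Fin n → Fin n → MvPolynomial (Fin n) R}
    (hg : ∀ i j, (X i - X j) * g i j = pderiv i f - pderiv j f) :
    ∑ k, pderiv k (vandermondePoly n R) * pderiv k f =
      vandermondePoly n R * ∑ i, ∑ j ∈ Finset.Ioi i, g i j := by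
  let D : Derivation R (MvPolynomial (Fin n) R) (MvPolynomial (Fin n) R) :=
    ∑ k, pderiv k f • pderiv k
  have hD : ∀ q, D q = ∑ k, pderiv k q * pderiv k f := fun q => by
    simp only [D, ← Derivation.coeFnAddMonoidHom_apply, map_sum, Finset.sum_apply]
    exact Finset.sum_congr rfl fun k _ => mul_comm _ _
  have hX : ∀ i, D (X i) = pderiv i f := fun i => by
    simp [hD, pderiv_X, Pi.single_apply]
  rw [← hD]
  exact derivation_prod_of_eq_mul D fun i _ => derivation_prod_of_eq_mul D fun j _ => by
    rw [map_sub, hX, hX]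
    linear_combination hg i j

theorem resDiag_laplacian (ψ : MvPolynomial (Fin n × Fin n) R) :
    resDiag (laplacian R Prod.swap ψ) = laplacian R id (resDiag ψ) +
      2 * ∑ i, ∑ j ∈ Finset.Ioi i, resDiag (pderiv (i, j) (pderiv (j, i) ψ)) := by
  have hoff := Finset.sum_sum_Ioi_add_eq_sum_sum_off_diag
    fun j i : Fin n => resDiag (pderiv (i, j) (pderiv (j, i) ψ))
  have hsplit : ∀ i, ∑ j, resDiag (pderiv (i, j) (pderiv (j, i) ψ)) =
      pderiv i (pderiv i (resDiag ψ)) +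
        ∑ j ∈ {i}ᶜ, resDiag (pderiv (i, j) (pderiv (j, i) ψ)) := fun i => by
    rw [Fintype.sum_eq_add_sum_compl i, pderiv_resDiag, pderiv_resDiag]
  simp only [pderiv_pderiv_comm, ← two_mul, ← Finset.mul_sum] at hoff
  rw [laplacian_apply, laplacian_apply, map_sum, Fintype.sum_prod_type]
  simp only [Prod.swap_prod_mk, hsplit, Finset.sum_add_distrib, id, ← hoff]

/-- `P` preserves conjugation invariance and acts on restrictions to diagonal matrices, multiplied
by the Vandermonde polynomial, as `Q`. -/
def HasRadialPart (P : Module.End R (MvPolynomial (Fin n × Fin n) R))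
    (Q : Module.End R (MvPolynomial (Fin n) R)) : Prop :=
  ∀ ψ, IsConjInv ψ →
    IsConjInv (P ψ) ∧ vandermondePoly n R * resDiag (P ψ) = Q (vandermondePoly n R * resDiag ψ)

theorem IsConjInv.hasRadialPart_lmul {p : MvPolynomial (Fin n × Fin n) R} (hp : IsConjInv p) :
    HasRadialPart (Algebra.lmul R _ p) (Algebra.lmul R _ (resDiag p)) := fun ψ hψ =>
  ⟨hp.mul hψ, by simp [mul_left_comm]⟩

variable [NoZeroDivisors R] [CharZero R]

/-- Conjugating by the Vandermonde polynomial turns the radial part of the matrix Laplacian into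
the flat Laplacian. -/
theorem IsConjInv.vandermondePoly_mul_resDiag_laplacian {ψ : MvPolynomial (Fin n × Fin n) R}
    (hψ : IsConjInv ψ) :
    vandermondePoly n R * resDiag (_root_.laplacian R Prod.swap ψ) =
      _root_.laplacian R id (vandermondePoly n R * resDiag ψ) := by
  have hgrad := sum_pderiv_vandermondePoly_mul hψ.X_sub_X_mul_resDiag
  rw [resDiag_laplacian, laplacian_mul, laplacian_vandermondePoly]
  simp only [id, Finset.sum_add_distrib, hgrad]
  ring

theorem HasRadialPart.innerDerivation_laplacian {P : Module.End R (MvPolynomial (Fin n × Fin n) R)}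
    {Q : Module.End R (MvPolynomial (Fin n) R)} (h : HasRadialPart P Q) :
    HasRadialPart (innerDerivation R (laplacian R Prod.swap) P)
      (innerDerivation R (laplacian R id) Q) := fun ψ hψ => by
  obtain ⟨hPψ, hQψ⟩ := h ψ hψ
  obtain ⟨hPL, hQL⟩ := h _ hψ.laplacian
  simp only [innerDerivation_apply, LinearMap.sub_apply, Module.End.mul_apply, map_sub, mul_sub]
  exact ⟨hPψ.laplacian.sub hPL, by
    rw [hPψ.vandermondePoly_mul_resDiag_laplacian, hQψ, hQL,
      hψ.vandermondePoly_mul_resDiag_laplacian]⟩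

theorem HasRadialPart.innerDerivation_laplacian_pow
    {P : Module.End R (MvPolynomial (Fin n × Fin n) R)} {Q : Module.End R (MvPolynomial (Fin n) R)}
    (h : HasRadialPart P Q) (k : ℕ) :
    HasRadialPart ((innerDerivation R (laplacian R Prod.swap) ^ k) P)
      ((innerDerivation R (laplacian R id) ^ k) Q) := by
  induction k with
  | zero => exact h
  | succ k ih =>
    rw [pow_succ', pow_succ']
    exact ih.innerDerivation_laplacian

/-- Harish-Chandra's homomorphism. The operator `p(∂)` is up to a factor the `k`-fold commutator of
multiplication by `p` with the Laplacian, and both the Laplacian and the multiplication have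
radial parts. -/
theorem IsConjInv.vandermondePoly_mul_resDiag_diffOp {k : ℕ} {p ψ : MvPolynomial (Fin n × Fin n) R}
    (hp : IsConjInv p) (hk : p.IsHomogeneous k) (hψ : IsConjInv ψ) :
    vandermondePoly n R * resDiag (diffOp (rename Prod.swap p) ψ) =
      diffOp (resDiag p) (vandermondePoly n R * resDiag ψ) := by
  have h := (hp.hasRadialPart_lmul.innerDerivation_laplacian_pow k ψ hψ).2
  rw [innerDerivation_laplacian_pow_lmul Prod.swap_swap hk,
    innerDerivation_laplacian_pow_lmul (fun _ => rfl) (isHomogeneous_resDiag hk), rename_id_apply,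
    LinearMap.smul_apply, LinearMap.smul_apply, map_nsmul, mul_smul_comm] at h
  exact nsmul_right_injective (by positivity) h

end RadialPart

section UnitaryInvariance

variable {ι : Type*} [Fintype ι]

/-- The gradient at `A`, with respect to the trace form, of a polynomial function of a matrix. -/
def traceGradient {R : Type*} [CommRing R] (ψ : MvPolynomial (ι × ι) R) (A : Matrix ι ι R) :
    Matrix ι ι R :=
  Matrix.of fun i j => eval (fun p => A p.1 p.2) (pderiv (j, i) ψ)

theorem eval_conjDeriv {R : Type*} [CommRing R] (ψ : MvPolynomial (ι × ι) R) (A : Matrix ι ι R)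
    (i j : ι) : eval (fun p => A p.1 p.2) (conjDeriv i j ψ) =
      (A * traceGradient ψ A - traceGradient ψ A * A) j i := by
  simp [conjDeriv_apply, traceGradient, Matrix.mul_apply, mul_comm]

theorem trace_mul_traceGradient {R : Type*} [CommRing R] (ψ : MvPolynomial (ι × ι) R)
    (H A : Matrix ι ι R) : (H * traceGradient ψ A).trace =
      ∑ p, H p.1 p.2 * eval (fun p => A p.1 p.2) (pderiv p ψ) := by
  simp [Matrix.trace, Matrix.mul_apply, traceGradient, Fintype.sum_prod_type]

theorem hasDerivAt_eval_curve {σ : Type*} [Fintype σ] (ψ : MvPolynomial σ ℂ) {γ : ℝ → σ → ℂ}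
    {γ' : σ → ℂ} {t : ℝ} (hγ : HasDerivAt γ γ' t) :
    HasDerivAt (fun s => eval (γ s) ψ) (∑ i, γ' i * eval (γ t) (pderiv i ψ)) t := by
  classical
  induction ψ using MvPolynomial.induction_on with
  | C c => simpa using hasDerivAt_const t c
  | add p q hp hq =>
    simp only [map_add, mul_add, Finset.sum_add_distrib]
    exact hp.add hq
  | mul_X p k hp =>
    simp only [map_mul, eval_X]
    refine (hp.mul (hasDerivAt_pi.1 hγ k)).congr_deriv ?_
    simp only [pderiv_mul, map_add, map_mul, pderiv_X, Pi.single_apply, eval_X, mul_add,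
      Finset.sum_add_distrib, apply_ite (eval (γ t)), map_zero, mul_ite, mul_one, mul_zero,
      Finset.sum_ite_eq, Finset.mem_univ, if_true, Finset.sum_mul, mul_assoc, mul_comm (γ' k)]

theorem eq_zero_of_forall_trace_skewAdjoint_mul {K : Matrix ι ι ℂ}
    (hK : ∀ S ∈ skewAdjoint (Matrix ι ι ℂ), (S * K).trace = 0) : K = 0 := by
  refine Matrix.ext_iff_trace_mul_left.2 fun S => ?_
  have hsub : (S * K).trace - (star S * K).trace = 0 := by
    rw [← Matrix.trace_sub, ← Matrix.sub_mul]
    exact hK _ (by simp [skewAdjoint.mem_iff])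
  have hadd : Complex.I * ((S * K).trace + (star S * K).trace) = 0 := by
    rw [← Matrix.trace_add, ← Matrix.add_mul, ← smul_eq_mul, ← Matrix.trace_smul,
      ← Matrix.smul_mul]
    exact hK _ (by simp [skewAdjoint.mem_iff, add_comm])
  rw [Matrix.mul_zero, Matrix.trace_zero]
  linear_combination (hsub + (mul_eq_zero.1 hadd).resolve_left Complex.I_ne_zero) / 2

variable [DecidableEq ι]

/-- Invariance of a polynomial function of a matrix under conjugation by unitary matrices. -/
def IsUnitaryInv (ψ : MvPolynomial (ι × ι) ℂ) : Prop :=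
  ∀ V ∈ Matrix.unitaryGroup ι ℂ, ∀ A : Matrix ι ι ℂ,
    eval (fun p => (V * A * star V) p.1 p.2) ψ = eval (fun p => A p.1 p.2) ψ

attribute [local instance] Matrix.linftyOpNormedRing Matrix.linftyOpNormedAlgebra

theorem hasDerivAt_conj_exp (S A : Matrix ι ι ℂ) :
    HasDerivAt (fun t : ℝ => NormedSpace.exp (t • S) * A * NormedSpace.exp (t • -S))
      (S * A - A * S) 0 := by
  have hleft := hasDerivAt_exp_smul_const (𝕂 := ℝ) S (0 : ℝ)
  have hright := hasDerivAt_exp_smul_const (𝕂 := ℝ) (-S) (0 : ℝ)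
  refine ((hleft.mul_const A).mul hright).congr_deriv ?_
  simp [sub_eq_add_neg]

theorem IsUnitaryInv.eval_conj_exp {ψ : MvPolynomial (ι × ι) ℂ} (hψ : IsUnitaryInv ψ)
    {S : Matrix ι ι ℂ} (hS : S ∈ skewAdjoint (Matrix ι ι ℂ)) (A : Matrix ι ι ℂ) (t : ℝ) :
    eval (fun p => (NormedSpace.exp (t • S) * A * NormedSpace.exp (t • -S)) p.1 p.2) ψ =
      eval (fun p => A p.1 p.2) ψ := by
  have hstar : NormedSpace.exp (t • -S) = star (NormedSpace.exp (t • S)) := by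
    rw [Matrix.star_eq_conjTranspose, ← Matrix.exp_conjTranspose, Matrix.conjTranspose_smul,
      star_trivial, ← Matrix.star_eq_conjTranspose, skewAdjoint.mem_iff.1 hS]
  have hunitary : NormedSpace.exp (t • S) ∈ Matrix.unitaryGroup ι ℂ := by
    rw [Matrix.mem_unitaryGroup_iff, ← hstar, smul_neg, Matrix.exp_neg, Matrix.mul_nonsing_inv]
    exact (Matrix.isUnit_iff_isUnit_det _).1 (Matrix.isUnit_exp _)
  rw [hstar]
  exact hψ _ hunitary A

theorem IsUnitaryInv.trace_skewAdjoint_mul_commutator {ψ : MvPolynomial (ι × ι) ℂ}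
    (hψ : IsUnitaryInv ψ) {S : Matrix ι ι ℂ} (hS : S ∈ skewAdjoint (Matrix ι ι ℂ))
    (A : Matrix ι ι ℂ) : (S * (A * traceGradient ψ A - traceGradient ψ A * A)).trace = 0 := by
  have hentry : HasDerivAt (fun (t : ℝ) (p : ι × ι) =>
      (NormedSpace.exp (t • S) * A * NormedSpace.exp (t • -S)) p.1 p.2)
      (fun p => (S * A - A * S) p.1 p.2) 0 := hasDerivAt_pi.2 fun p =>
    (Matrix.entryLinearMap ℝ ℂ p.1 p.2).toContinuousLinearMap.hasFDerivAt.comp_hasDerivAt 0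
      (hasDerivAt_conj_exp S A)
  have hcurve := hasDerivAt_eval_curve ψ hentry
  simp only [hψ.eval_conj_exp hS] at hcurve
  have hgrad : ((S * A - A * S) * traceGradient ψ A).trace = 0 := by
    rw [trace_mul_traceGradient]
    simpa using hcurve.unique (hasDerivAt_const 0 _)
  rw [Matrix.sub_mul, Matrix.trace_sub, Matrix.mul_assoc A, Matrix.trace_mul_comm A,
    Matrix.mul_assoc, Matrix.mul_assoc] at hgrad
  rw [Matrix.mul_sub, Matrix.trace_sub, hgrad]

theorem IsUnitaryInv.isConjInv {ψ : MvPolynomial (ι × ι) ℂ} (hψ : IsUnitaryInv ψ) :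
    IsConjInv ψ := fun i j => by
  refine MvPolynomial.funext fun x => ?_
  let A : Matrix ι ι ℂ := Matrix.of fun k l => x (k, l)
  have hcomm := eq_zero_of_forall_trace_skewAdjoint_mul fun S hS =>
    hψ.trace_skewAdjoint_mul_commutator hS A
  rw [map_zero]
  exact (eval_conjDeriv ψ A i j).trans (by rw [hcomm, Matrix.zero_apply])

end UnitaryInvariance

section Average

variable {G σ 𝕜 : Type*} [MeasurableSpace G] [Fintype σ] [DecidableEq σ] [RCLike 𝕜]
  {μ : Measure G} {m : ℕ} {P : G → MvPolynomial σ 𝕜}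

/-- The coefficientwise average of a family of homogeneous polynomials of degree `m`. -/
def avgPoly (μ : Measure G) (m : ℕ) (P : G → MvPolynomial σ 𝕜) : MvPolynomial σ 𝕜 :=
  ∑ s ∈ Finset.finsuppAntidiag Finset.univ m, monomial s (∫ g, coeff s (P g) ∂μ)

theorem isHomogeneous_avgPoly : (avgPoly μ m P).IsHomogeneous m := by
  refine IsHomogeneous.sum _ _ _ fun s hs => isHomogeneous_monomial _ ?_
  rw [Finsupp.degree_eq_sum, (Finset.mem_finsuppAntidiag.1 hs).1]

theorem map_eq_sum_finsuppAntidiag {R M : Type*} [CommSemiring R] [AddCommMonoid M] [Module R M]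
    {p : MvPolynomial σ R} (hp : p.IsHomogeneous m) (Λ : MvPolynomial σ R →ₗ[R] M) :
    Λ p = ∑ s ∈ Finset.finsuppAntidiag Finset.univ m, coeff s p • Λ (monomial s 1) := by
  have hsupport : p.support ⊆ Finset.finsuppAntidiag Finset.univ m := fun s hs => by
    rw [Finset.mem_finsuppAntidiag, ← Finsupp.degree_eq_sum]
    exact ⟨Finsupp.degree_eq_weight_one (R := ℕ) ▸ hp (mem_support_iff.1 hs),
      Finset.subset_univ _⟩
  conv_lhs => rw [p.as_sum, map_sum]
  rw [← Finset.sum_subset hsupport fun s _ hs => by rw [notMem_support_iff.1 hs, zero_smul]]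
  refine Finset.sum_congr rfl fun s _ => ?_
  rw [← map_smul, smul_monomial, smul_eq_mul, mul_one]

theorem map_avgPoly (hP : ∀ g, (P g).IsHomogeneous m)
    (hi : ∀ s, Integrable (fun g => coeff s (P g)) μ) (Λ : MvPolynomial σ 𝕜 →ₗ[𝕜] 𝕜) :
    Λ (avgPoly μ m P) = ∫ g, Λ (P g) ∂μ := by
  simp only [fun g => map_eq_sum_finsuppAntidiag (hP g) Λ, smul_eq_mul]
  rw [integral_finsetSum _ fun s _ => (hi s).mul_const _, avgPoly, map_sum]
  refine Finset.sum_congr rfl fun s _ => ?_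
  rw [integral_mul_const, ← smul_eq_mul (∫ g, coeff s (P g) ∂μ), ← map_smul, smul_monomial,
    smul_eq_mul, mul_one]

end Average

section CompactGroup

instance matrixBorelSpace (n : ℕ) : BorelSpace (Matrix (Fin n) (Fin n) ℂ) := ⟨rfl⟩

instance matrixSecondCountableTopology (n : ℕ) :
    SecondCountableTopology (Matrix (Fin n) (Fin n) ℂ) :=
  inferInstanceAs (SecondCountableTopology (Fin n → Fin n → ℂ))

instance unitaryGroupCompactSpace {ι : Type*} [Fintype ι] [DecidableEq ι] :
    CompactSpace (Matrix.unitaryGroup ι ℂ) := by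
  refine isCompact_iff_compactSpace.1 (IsCompact.of_isClosed_subset
    (isCompact_univ_pi fun _ => isCompact_univ_pi fun _ => isCompact_closedBall (0 : ℂ) 1)
    (isClosed_unitary (R := Matrix ι ι ℂ)) fun A hA i _ j _ => ?_)
  exact mem_closedBall_zero_iff.2 (entry_norm_bound_of_unitary hA i j)

/-- A left-invariant probability measure on a compact group is its Haar measure, and uniqueness of
the latter makes it invariant under right translations. -/
theorem isMulRightInvariant_of_isProbabilityMeasure {G : Type*} [Group G] [TopologicalSpace G]
    [IsTopologicalGroup G] [CompactSpace G] [MeasurableSpace G] [BorelSpace G] (μ : Measure G)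
    [IsProbabilityMeasure μ] [μ.IsMulLeftInvariant] : μ.IsMulRightInvariant := by
  have hhaar : μ.IsHaarMeasure := Measure.isHaarMeasure_of_isCompact_nonempty_interior μ Set.univ
    isCompact_univ (by simp) (by simp) (by simp)
  refine ⟨fun g => ?_⟩
  have hprob : IsProbabilityMeasure (μ.map (· * g)) :=
    Measure.isProbabilityMeasure_map (measurable_mul_const g).aemeasurable
  exact Measure.isHaarMeasure_eq_of_isProbabilityMeasure _ _

end CompactGroup

section TraceExponential

variable {ι 𝕜 : Type*} [Fintype ι] [Field 𝕜]

/-- The degree `m` part of the function `A ↦ exp (tr (A B))` of a matrix `A`. -/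
def traceExpPart (B : Matrix ι ι 𝕜) (m : ℕ) : MvPolynomial (ι × ι) 𝕜 :=
  expPart (fun p => B p.2 p.1) m

theorem isHomogeneous_traceExpPart (B : Matrix ι ι 𝕜) (m : ℕ) :
    (traceExpPart B m).IsHomogeneous m :=
  isHomogeneous_expPart _ m

theorem eval_traceExpPart (B A : Matrix ι ι 𝕜) (m : ℕ) :
    eval (fun p => A p.1 p.2) (traceExpPart B m) = (m.factorial : 𝕜)⁻¹ * (A * B).trace ^ m := by
  simp [traceExpPart, eval_expPart, Matrix.trace, Matrix.mul_apply, Fintype.sum_prod_type, mul_comm]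

variable [CharZero 𝕜]

theorem coeff_traceExpPart (B : Matrix ι ι 𝕜) (m : ℕ) (s : ι × ι →₀ ℕ) :
    coeff s (traceExpPart B m) =
      if s.degree = m then ∏ p, B p.2 p.1 ^ s p / (s p).factorial else 0 :=
  coeff_expPart _ m s

theorem diffOp_traceExpPart (B : Matrix ι ι 𝕜) {p : MvPolynomial (ι × ι) 𝕜} {k : ℕ}
    (hp : p.IsHomogeneous k) (m : ℕ) : diffOp (rename Prod.swap p) (traceExpPart B m) =
      if k ≤ m then eval (fun q => B q.1 q.2) p • traceExpPart B (m - k) else 0 := by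
  rw [traceExpPart, diffOp_expPart _ (hp.rename_isHomogeneous), eval_rename]
  rfl

end TraceExponential

section OrbitAverage

variable {n : ℕ}

/-- The point `U* B U` of the orbit of `B` under unitary conjugation. -/
def orbitPoint (B : Matrix (Fin n) (Fin n) ℂ) (U : Matrix.unitaryGroup (Fin n) ℂ) :
    Matrix (Fin n) (Fin n) ℂ :=
  star (U : Matrix (Fin n) (Fin n) ℂ) * B * (U : Matrix (Fin n) (Fin n) ℂ)

@[fun_prop]
theorem continuous_orbitPoint (B : Matrix (Fin n) (Fin n) ℂ) : Continuous (orbitPoint B) := by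
  unfold orbitPoint
  fun_prop

theorem trace_conj_mul_orbitPoint (A B : Matrix (Fin n) (Fin n) ℂ)
    (U V : Matrix.unitaryGroup (Fin n) ℂ) :
    (V * A * star (V : Matrix (Fin n) (Fin n) ℂ) * orbitPoint B U).trace =
      (A * orbitPoint B (U * V)).trace := by
  rw [orbitPoint, orbitPoint, Matrix.UnitaryGroup.mul_val, star_mul, Matrix.mul_assoc,
    Matrix.mul_assoc, Matrix.trace_mul_comm]
  simp only [Matrix.mul_assoc]

theorem charpoly_unitary_conj {ι R : Type*} [Fintype ι] [DecidableEq ι] [CommRing R] [StarRing R]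
    (V : Matrix.unitaryGroup ι R) (A : Matrix ι ι R) :
    (V * A * star (V : Matrix ι ι R)).charpoly = A.charpoly := by
  have h := Matrix.charpoly_units_conj (Unitary.toUnits V) A
  rwa [← Matrix.coe_units_inv] at h

theorem charpoly_orbitPoint (B : Matrix (Fin n) (Fin n) ℂ) (U : Matrix.unitaryGroup (Fin n) ℂ) :
    (orbitPoint B U).charpoly = B.charpoly := by
  simpa [orbitPoint] using charpoly_unitary_conj (star U) B

/-- The degree `m` part of the function `A ↦ ∫ exp (tr (A U* B U)) dμ(U)` of a matrix `A`. -/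
def orbitPoly (μ : Measure (Matrix.unitaryGroup (Fin n) ℂ)) (B : Matrix (Fin n) (Fin n) ℂ) (m : ℕ) :
    MvPolynomial (Fin n × Fin n) ℂ :=
  avgPoly μ m fun U => traceExpPart (orbitPoint B U) m

theorem isHomogeneous_orbitPoly (μ : Measure (Matrix.unitaryGroup (Fin n) ℂ))
    (B : Matrix (Fin n) (Fin n) ℂ) (m : ℕ) : (orbitPoly μ B m).IsHomogeneous m :=
  isHomogeneous_avgPoly

variable {μ : Measure (Matrix.unitaryGroup (Fin n) ℂ)} [IsProbabilityMeasure μ]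

theorem map_orbitPoly (B : Matrix (Fin n) (Fin n) ℂ) (m : ℕ)
    (Λ : MvPolynomial (Fin n × Fin n) ℂ →ₗ[ℂ] ℂ) :
    Λ (orbitPoly μ B m) = ∫ U, Λ (traceExpPart (orbitPoint B U) m) ∂μ := by
  refine map_avgPoly (fun _ => isHomogeneous_traceExpPart _ _) (fun s => ?_) Λ
  refine Continuous.integrable_of_hasCompactSupport ?_ (HasCompactSupport.of_compactSpace _)
  simp only [coeff_traceExpPart]
  split_ifs <;> fun_prop

theorem eval_orbitPoly (B A : Matrix (Fin n) (Fin n) ℂ) (m : ℕ) :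
    eval (fun p => A p.1 p.2) (orbitPoly μ B m) =
      ∫ U, (m.factorial : ℂ)⁻¹ * (A * orbitPoint B U).trace ^ m ∂μ := by
  simpa only [AlgHom.toLinearMap_apply, aeval_eq_eval, RingHom.coe_coe, eval_traceExpPart] using
    map_orbitPoly (μ := μ) B m (aeval (R := ℂ) fun p : Fin n × Fin n => A p.1 p.2).toLinearMap

theorem isUnitaryInv_orbitPoly [μ.IsMulLeftInvariant] (B : Matrix (Fin n) (Fin n) ℂ) (m : ℕ) :
    IsUnitaryInv (orbitPoly μ B m) := fun V hV A => by
  have := isMulRightInvariant_of_isProbabilityMeasure μ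
  simp only [eval_orbitPoly, trace_conj_mul_orbitPoint A B _ ⟨V, hV⟩]
  exact integral_mul_right_eq_self
    (fun U => (m.factorial : ℂ)⁻¹ * (A * orbitPoint B U).trace ^ m) ⟨V, hV⟩

theorem eval_charpoly_univ_coeff {ι R : Type*} [Fintype ι] [DecidableEq ι] [CommRing R]
    (A : Matrix ι ι R) (k : ℕ) :
    eval (fun p => A p.1 p.2) ((Matrix.charpoly.univ R ι).coeff k) = A.charpoly.coeff k :=
  Matrix.charpoly.univ_coeff_eval₂Hom ι (RingHom.id R) (fun p => A p.1 p.2) k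

theorem isConjInv_charpoly_univ_coeff {ι : Type*} [Fintype ι] [DecidableEq ι] (k : ℕ) :
    IsConjInv ((Matrix.charpoly.univ ℂ ι).coeff k) :=
  IsUnitaryInv.isConjInv fun V hV A => by
    rw [eval_charpoly_univ_coeff, eval_charpoly_univ_coeff, charpoly_unitary_conj ⟨V, hV⟩]

theorem diffOp_charpoly_univ_coeff_orbitPoly (B : Matrix (Fin n) (Fin n) ℂ) {k l : ℕ}
    (hkl : k + l = n) (m : ℕ) :
    diffOp (rename Prod.swap ((Matrix.charpoly.univ ℂ (Fin n)).coeff k)) (orbitPoly μ B m) =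
      if l ≤ m then B.charpoly.coeff k • orbitPoly μ B (m - l) else 0 := by
  have hhom := Matrix.charpoly.univ_coeff_isHomogeneous ℂ (Fin n) k l
    (hkl.trans (Fintype.card_fin n).symm)
  ext s
  have hcoeff := map_orbitPoly (μ := μ) B (m - l) (lcoeff ℂ s)
  have hdiff := map_orbitPoly (μ := μ) B m
    (lcoeff ℂ s ∘ₗ diffOp (rename Prod.swap ((Matrix.charpoly.univ ℂ (Fin n)).coeff k)))
  simp only [LinearMap.comp_apply, lcoeff_apply, diffOp_traceExpPart _ hhom,
    eval_charpoly_univ_coeff, charpoly_orbitPoint] at hcoeff hdiff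
  rw [hdiff]
  split_ifs
  · simp only [coeff_smul, integral_smul, hcoeff]
  · simp

end OrbitAverage

section DiagonalCharpoly

variable {ι R : Type*} [Fintype ι] [DecidableEq ι] [CommRing R]

variable (ι R) in
/-- The `k`-th coefficient of the characteristic polynomial of the diagonal matrix with the
variables as entries, that is, up to sign an elementary symmetric polynomial. -/
def diagCharCoeff (k : ℕ) : MvPolynomial ι R := resDiag ((Matrix.charpoly.univ R ι).coeff k)

theorem diagCharCoeff_eq_coeff_charpoly (k : ℕ) :
    diagCharCoeff ι R k = (Matrix.diagonal (X : ι → MvPolynomial ι R)).charpoly.coeff k :=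
  Matrix.charpoly.univ_coeff_eval₂Hom ι (algebraMap R (MvPolynomial ι R))
    (fun p => Matrix.diagonal X p.1 p.2) k

theorem isHomogeneous_diagCharCoeff [Nontrivial R] {k l : ℕ} (hkl : k + l = Fintype.card ι) :
    (diagCharCoeff ι R k).IsHomogeneous l :=
  isHomogeneous_resDiag (Matrix.charpoly.univ_coeff_isHomogeneous R ι k l hkl)

theorem eval_diagCharCoeff (a : ι → R) (k : ℕ) :
    eval a (diagCharCoeff ι R k) = (Matrix.diagonal a).charpoly.coeff k := by
  rw [diagCharCoeff, eval_resDiag, eval_charpoly_univ_coeff]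

theorem charpoly_diagonal_comp_perm (a : ι → R) (π : Equiv.Perm ι) :
    (Matrix.diagonal (a ∘ π)).charpoly = (Matrix.diagonal a).charpoly := by
  rw [Matrix.charpoly_diagonal, Matrix.charpoly_diagonal]
  exact Equiv.prod_comp π fun i => Polynomial.X - Polynomial.C (a i)

theorem X_pow_card_eq_neg_sum_diagCharCoeff (i : ι) :
    (X i : MvPolynomial ι R) ^ Fintype.card ι =
      -∑ k ∈ Finset.range (Fintype.card ι), X i ^ k * diagCharCoeff ι R k := by
  nontriviality R
  have hmonic := Matrix.charpoly_monic (Matrix.diagonal (X : ι → MvPolynomial ι R))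
  have hroot : (Matrix.diagonal (X : ι → MvPolynomial ι R)).charpoly.eval (X i) = 0 := by
    rw [Matrix.charpoly_diagonal, Polynomial.eval_prod]
    exact Finset.prod_eq_zero (Finset.mem_univ i) (by simp)
  rw [hmonic.as_sum, Matrix.charpoly_natDegree_eq_dim] at hroot
  simp only [Polynomial.eval_add, Polynomial.eval_pow, Polynomial.eval_X,
    Polynomial.eval_finsetSum, Polynomial.eval_mul, Polynomial.eval_C,
    ← diagCharCoeff_eq_coeff_charpoly, mul_comm (diagCharCoeff _ _ _)] at hroot
  exact eq_neg_of_add_eq_zero_left hroot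

theorem diffOp_X_pow_card_eq_zero {q : MvPolynomial ι R}
    (h : ∀ k < Fintype.card ι, diffOp (diagCharCoeff ι R k) q = 0) (i : ι) :
    diffOp (X i ^ Fintype.card ι) q = 0 := by
  rw [X_pow_card_eq_neg_sum_diagCharCoeff, map_neg, map_sum, LinearMap.neg_apply,
    LinearMap.sum_apply, neg_eq_zero]
  exact Finset.sum_eq_zero fun k hk => by
    rw [diffOp_mul_apply, h k (Finset.mem_range.1 hk), map_zero]

end DiagonalCharpoly

section AlternatingEigenfamily

variable {n : ℕ} {R : Type*} [CommRing R] {χ : Polynomial R} {F G : ℕ → MvPolynomial (Fin n) R}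

/-- `F` lists the homogeneous components of an alternating formal power series which is a joint
eigenfunction of the operators `e(∂)`, for `e` the coefficients `diagCharCoeff`, with the
coefficients of `χ` as eigenvalues. -/
structure IsAlternatingEigenfamily (χ : Polynomial R) (F : ℕ → MvPolynomial (Fin n) R) : Prop where
  isAlternating (j : ℕ) : IsAlternating (F j)
  isHomogeneous (j : ℕ) : (F j).IsHomogeneous j
  diffOp_diagCharCoeff {k l : ℕ} (hkl : k + l = n) (j : ℕ) :
    diffOp (diagCharCoeff (Fin n) R k) (F j) = if l ≤ j then χ.coeff k • F (j - l) else 0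

theorem IsAlternatingEigenfamily.smul (hF : IsAlternatingEigenfamily χ F) (c : R) :
    IsAlternatingEigenfamily χ fun j => c • F j where
  isAlternating j := (hF.isAlternating j).smul c
  isHomogeneous j := (homogeneousSubmodule _ R j).smul_mem c (hF.isHomogeneous j)
  diffOp_diagCharCoeff hkl j := by
    rw [map_smul, hF.diffOp_diagCharCoeff hkl, smul_ite, smul_zero, smul_comm]

theorem IsAlternatingEigenfamily.sub (hF : IsAlternatingEigenfamily χ F)
    (hG : IsAlternatingEigenfamily χ G) : IsAlternatingEigenfamily χ fun j => F j - G j where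
  isAlternating j := (hF.isAlternating j).sub (hG.isAlternating j)
  isHomogeneous j := (hF.isHomogeneous j).sub (hG.isHomogeneous j)
  diffOp_diagCharCoeff hkl j := by
    rw [map_sub, hF.diffOp_diagCharCoeff hkl, hG.diffOp_diagCharCoeff hkl, smul_sub]
    split_ifs <;> simp

variable [NoZeroDivisors R] [CharZero R]

theorem IsAlternatingEigenfamily.eq_zero (hF : IsAlternatingEigenfamily χ F)
    (hδ : coeff (delta n) (F (delta n).degree) = 0) (j : ℕ) : F j = 0 := by
  induction j using Nat.strong_induction_on with
  | _ j ih =>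
    have hkill : ∀ k < Fintype.card (Fin n), diffOp (diagCharCoeff (Fin n) R k) (F j) = 0 :=
      fun k hk => by
        rw [Fintype.card_fin] at hk
        rw [hF.diffOp_diagCharCoeff (Nat.add_sub_cancel' hk.le)]
        split_ifs
        · rw [ih _ (by omega), smul_zero]
        · rfl
    refine (hF.isAlternating j).eq_zero (fun s i hs => ?_) ?_
    · exact coeff_eq_zero_of_diffOp_X_pow_eq_zero (diffOp_X_pow_card_eq_zero hkill i) (by simpa)
    · rcases eq_or_ne (delta n).degree j with rfl | hj
      · exact hδ
      · exact (hF.isHomogeneous j).coeff_eq_zero hj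

theorem IsAlternatingEigenfamily.ext (hF : IsAlternatingEigenfamily χ F)
    (hG : IsAlternatingEigenfamily χ G)
    (hδ : coeff (delta n) (F (delta n).degree) = coeff (delta n) (G (delta n).degree)) (j : ℕ) :
    F j = G j :=
  sub_eq_zero.1 ((hF.sub hG).eq_zero (by rw [coeff_sub, hδ, sub_self]) j)

end AlternatingEigenfamily

section AlternatingExponential

variable {ι 𝕜 : Type*} [Fintype ι] [Field 𝕜]

theorem rename_expPart_comp (b : ι → 𝕜) (ρ : Equiv.Perm ι) (j : ℕ) :
    rename ρ (expPart (b ∘ ρ) j) = expPart b j := by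
  simp only [expPart, map_smul, map_pow, map_sum, rename_X, Function.comp_apply]
  rw [Equiv.sum_comp ρ fun i => b i • (X i : MvPolynomial ι 𝕜)]

variable [DecidableEq ι]

/-- The degree `j` part of the function `a ↦ det (exp (b_i a_j))`. -/
def altExpPart (b : ι → 𝕜) (j : ℕ) : MvPolynomial ι 𝕜 :=
  ∑ π : Equiv.Perm ι, ((Equiv.Perm.sign π : ℤ) : 𝕜) • expPart (b ∘ π) j

theorem eval_altExpPart (b a : ι → 𝕜) (j : ℕ) : eval a (altExpPart b j) =
    ∑ π : Equiv.Perm ι, ((Equiv.Perm.sign π : ℤ) : 𝕜) *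
      ((j.factorial : 𝕜)⁻¹ * (∑ i, b (π i) * a i) ^ j) := by
  simp [altExpPart, smul_eval, eval_expPart]

theorem isAlternating_altExpPart (b : ι → 𝕜) (j : ℕ) : IsAlternating (altExpPart b j) := fun ρ => by
  rw [altExpPart, map_sum, Finset.smul_sum, ← Equiv.sum_comp (Equiv.mulRight ρ)]
  refine Finset.sum_congr rfl fun π _ => ?_
  rw [map_smul, Equiv.coe_mulRight, Equiv.Perm.coe_mul, ← Function.comp_assoc, rename_expPart_comp,
    Equiv.Perm.sign_mul, ← Int.cast_smul_eq_zsmul 𝕜, smul_smul, mul_comm]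
  push_cast
  rfl

variable [CharZero 𝕜] {n : ℕ}

theorem isAlternatingEigenfamily_altExpPart (b : Fin n → 𝕜) :
    IsAlternatingEigenfamily (Matrix.diagonal b).charpoly (altExpPart b) where
  isAlternating := isAlternating_altExpPart b
  isHomogeneous j := IsHomogeneous.sum _ _ _ fun _ _ =>
    (homogeneousSubmodule _ 𝕜 j).smul_mem _ (isHomogeneous_expPart _ _)
  diffOp_diagCharCoeff {k l} hkl j := by
    have hhom := isHomogeneous_diagCharCoeff (R := 𝕜) (hkl.trans (Fintype.card_fin n).symm)
    simp only [altExpPart, map_sum, map_smul, diffOp_expPart _ hhom, eval_diagCharCoeff,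
      charpoly_diagonal_comp_perm, smul_ite, smul_zero, Finset.sum_ite_irrel,
      Finset.sum_const_zero, Finset.smul_sum, smul_comm ((Matrix.diagonal b).charpoly.coeff k)]

theorem coeff_delta_altExpPart (b : Fin n → 𝕜) :
    coeff (delta n) (altExpPart b (delta n).degree) =
      (∏ i : Fin n, ((i : ℕ).factorial : 𝕜))⁻¹ * (Matrix.vandermonde b).det := by
  rw [Matrix.det_apply', altExpPart, coeff_sum, Finset.mul_sum]
  refine Finset.sum_congr rfl fun π _ => ?_
  rw [coeff_smul, coeff_expPart, if_pos rfl, Finset.prod_div_distrib, smul_eq_mul]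
  simp only [Matrix.vandermonde_apply, delta_apply, Function.comp_apply]
  ring

end AlternatingExponential

section OrbitEigenfamily

variable {n : ℕ}

theorem permMatrix_conj_diagonal {ι R : Type*} [Fintype ι] [DecidableEq ι] [CommRing R] [StarRing R]
    (π : Equiv.Perm ι) (a : ι → R) :
    π.permMatrix R * Matrix.diagonal a * star (π.permMatrix R) = Matrix.diagonal (a ∘ π) := by
  rw [Matrix.star_eq_conjTranspose, Matrix.conjTranspose_permMatrix, Equiv.Perm.permMatrix,
    Equiv.Perm.permMatrix, PEquiv.toMatrix_toPEquiv_mul, PEquiv.mul_toMatrix_toPEquiv]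
  ext i j
  simp [Matrix.diagonal_apply, Equiv.Perm.inv_def]

theorem permMatrix_mem_unitaryGroup {ι R : Type*} [Fintype ι] [DecidableEq ι] [CommRing R]
    [StarRing R] (π : Equiv.Perm ι) : π.permMatrix R ∈ Matrix.unitaryGroup ι R := by
  rw [Matrix.mem_unitaryGroup_iff, Matrix.star_eq_conjTranspose, Matrix.conjTranspose_permMatrix,
    ← Matrix.permMatrix_mul, inv_mul_cancel, Matrix.permMatrix_one]

theorem IsUnitaryInv.rename_resDiag {ι : Type*} [Fintype ι] [DecidableEq ι]
    {ψ : MvPolynomial (ι × ι) ℂ} (hψ : IsUnitaryInv ψ) (π : Equiv.Perm ι) :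
    rename π (resDiag ψ) = resDiag ψ := by
  refine MvPolynomial.funext fun a => ?_
  rw [eval_rename, eval_resDiag, eval_resDiag, ← permMatrix_conj_diagonal,
    hψ _ (permMatrix_mem_unitaryGroup π)]

/-- The degree `j` part of the function `a ↦ Δ(a) ∫ exp (tr (diag(a) U* B U)) dμ(U)`. -/
def vandermondeOrbitPoly (μ : Measure (Matrix.unitaryGroup (Fin n) ℂ))
    (B : Matrix (Fin n) (Fin n) ℂ) (j : ℕ) : MvPolynomial (Fin n) ℂ :=
  if (delta n).degree ≤ j then
    vandermondePoly n ℂ * resDiag (orbitPoly μ B (j - (delta n).degree))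
  else 0

variable {μ : Measure (Matrix.unitaryGroup (Fin n) ℂ)} [IsProbabilityMeasure μ]

theorem diffOp_diagCharCoeff_vandermondePoly_mul_resDiag_orbitPoly [μ.IsMulLeftInvariant]
    (B : Matrix (Fin n) (Fin n) ℂ) {k l : ℕ} (hkl : k + l = n) (m : ℕ) :
    diffOp (diagCharCoeff (Fin n) ℂ k) (vandermondePoly n ℂ * resDiag (orbitPoly μ B m)) =
      if l ≤ m then B.charpoly.coeff k • (vandermondePoly n ℂ * resDiag (orbitPoly μ B (m - l)))
      else 0 := by
  have hhom := Matrix.charpoly.univ_coeff_isHomogeneous ℂ (Fin n) k l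
    (hkl.trans (Fintype.card_fin n).symm)
  rw [diagCharCoeff, ← (isConjInv_charpoly_univ_coeff k).vandermondePoly_mul_resDiag_diffOp hhom
    (isUnitaryInv_orbitPoly B m).isConjInv, diffOp_charpoly_univ_coeff_orbitPoly B hkl]
  split_ifs
  · rw [map_smul, mul_smul_comm]
  · rw [map_zero, mul_zero]

theorem isAlternatingEigenfamily_vandermondeOrbitPoly [μ.IsMulLeftInvariant]
    (B : Matrix (Fin n) (Fin n) ℂ) :
    IsAlternatingEigenfamily B.charpoly (vandermondeOrbitPoly μ B) where
  isAlternating j := by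
    rw [vandermondeOrbitPoly]
    split_ifs
    · exact isAlternating_vandermondePoly.mul_of_rename_eq
        (isUnitaryInv_orbitPoly B _).rename_resDiag
    · exact fun π => by rw [map_zero, smul_zero]
  isHomogeneous j := by
    rw [vandermondeOrbitPoly]
    split_ifs with hj
    · have hmul := isHomogeneous_vandermondePoly.mul
        (isHomogeneous_resDiag (isHomogeneous_orbitPoly μ B (j - (delta n).degree)))
      rwa [Nat.add_sub_cancel' hj] at hmul
    · exact isHomogeneous_zero _ _ _
  diffOp_diagCharCoeff {k l} hkl j := by
    simp only [vandermondeOrbitPoly]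
    by_cases hj : (delta n).degree ≤ j
    · rw [if_pos hj, diffOp_diagCharCoeff_vandermondePoly_mul_resDiag_orbitPoly B hkl,
        Nat.sub_right_comm]
      by_cases hl : l ≤ j - (delta n).degree
      · rw [if_pos hl, if_pos (by omega), if_pos (by omega)]
      · rw [if_neg hl]
        split_ifs
        · omega
        · rw [smul_zero]
        · rfl
    · have hl : ¬(delta n).degree ≤ j - l := by omega
      rw [if_neg hj, map_zero, if_neg hl, smul_zero, ite_self]

theorem orbitPoly_zero (B : Matrix (Fin n) (Fin n) ℂ) : orbitPoly μ B 0 = 1 := by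
  refine MvPolynomial.funext fun x => (eval_orbitPoly B (Matrix.of fun i j => x (i, j)) 0).trans ?_
  simp

/-- Both sides are alternating eigenfamilies with the same eigenvalues, and they have the same
coefficient at the leading monomial of the Vandermonde polynomial. -/
theorem det_vandermonde_smul_vandermondeOrbitPoly [μ.IsMulLeftInvariant] (b : Fin n → ℂ) (j : ℕ) :
    (Matrix.vandermonde b).det • vandermondeOrbitPoly μ (Matrix.diagonal b) j =
      (∏ i : Fin n, ((i : ℕ).factorial : ℂ)) • altExpPart b j := by
  have hsuperfactorial : ∏ i : Fin n, ((i : ℕ).factorial : ℂ) ≠ 0 :=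
    Finset.prod_ne_zero_iff.2 fun i _ => Nat.cast_ne_zero.2 (i : ℕ).factorial_ne_zero
  refine ((isAlternatingEigenfamily_vandermondeOrbitPoly _).smul _).ext
    ((isAlternatingEigenfamily_altExpPart b).smul _) ?_ j
  rw [coeff_smul, coeff_smul, coeff_delta_altExpPart, vandermondeOrbitPoly, if_pos le_rfl,
    Nat.sub_self, orbitPoly_zero, map_one, mul_one, coeff_delta_vandermondePoly, smul_eq_mul,
    smul_eq_mul, mul_one, mul_inv_cancel_left₀ hsuperfactorial]

end OrbitEigenfamily

section VandermondeEvaluation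

variable {n : ℕ}

theorem eval_vandermondePoly (a : Fin n → ℂ) : eval a (vandermondePoly n ℂ) = vdmC a := by
  simp [vandermondePoly, vdmC]

theorem vdmC_eq_det (a : Fin n → ℂ) : vdmC a = (Matrix.vandermonde a).det :=
  (Matrix.det_vandermonde a).symm

theorem vdmC_ne_zero {a : Fin n → ℂ} (ha : Function.Injective a) : vdmC a ≠ 0 := by
  rw [vdmC_eq_det]
  exact Matrix.det_vandermonde_ne_zero_iff.2 ha

theorem vdmC_comp_perm (a : Fin n → ℂ) (π : Equiv.Perm (Fin n)) :
    vdmC (a ∘ π) = ((Equiv.Perm.sign π : ℤ) : ℂ) * vdmC a := by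
  rw [vdmC_eq_det, vdmC_eq_det, ← Matrix.det_permute]
  rfl

@[fun_prop]
theorem continuous_vdmC : Continuous (vdmC (n := n)) := by
  unfold vdmC
  fun_prop

end VandermondeEvaluation

section UnitaryIntegral

theorem hasSum_inv_factorial_mul_pow_exp (z : ℂ) :
    HasSum (fun m : ℕ => (m.factorial : ℂ)⁻¹ * z ^ m) (Complex.exp z) := by
  simpa only [← Complex.exp_eq_exp_ℂ, div_eq_inv_mul] using NormedSpace.expSeries_div_hasSum_exp z

theorem hasSum_integral_pow_exp {X : Type*} [TopologicalSpace X] [CompactSpace X]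
    [MeasurableSpace X] [OpensMeasurableSpace X] (μ : Measure X) [IsFiniteMeasure μ] {T : X → ℂ}
    (hT : Continuous T) :
    HasSum (fun m : ℕ => ∫ x, (m.factorial : ℂ)⁻¹ * T x ^ m ∂μ) (∫ x, Complex.exp (T x) ∂μ) := by
  obtain ⟨R, hR⟩ := (isCompact_range hT).isBounded.exists_norm_le
  refine hasSum_integral_of_dominated_convergence (fun m _ => R ^ m / m.factorial)
    (fun m => Continuous.aestronglyMeasurable (by fun_prop)) (fun m => .of_forall fun x => ?_)
    (.of_forall fun _ => Real.summable_pow_div_factorial R) (integrable_const _)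
    (.of_forall fun x => hasSum_inv_factorial_mul_pow_exp (T x))
  rw [norm_mul, norm_inv, norm_pow, Complex.norm_natCast, ← div_eq_inv_mul]
  gcongr
  exact hR _ ⟨x, rfl⟩

theorem hasSum_eval_altExpPart {ι : Type*} [Fintype ι] [DecidableEq ι] (b a : ι → ℂ) :
    HasSum (fun j => eval a (altExpPart b j))
      (Matrix.of fun i j => Complex.exp (b i * a j)).det := by
  simp only [eval_altExpPart, Matrix.det_apply', Matrix.of_apply, ← Complex.exp_sum]
  exact hasSum_sum fun π _ => (hasSum_inv_factorial_mul_pow_exp _).mul_left _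

variable {n : ℕ} {μ : Measure (Matrix.unitaryGroup (Fin n) ℂ)} [IsProbabilityMeasure μ]

theorem hasSum_eval_vandermondeOrbitPoly (B : Matrix (Fin n) (Fin n) ℂ) (a : Fin n → ℂ) :
    HasSum (fun j => eval a (vandermondeOrbitPoly μ B j))
      (vdmC a * ∫ U, Complex.exp (Matrix.diagonal a * orbitPoint B U).trace ∂μ) := by
  have hlow : ∑ j ∈ Finset.range (delta n).degree, eval a (vandermondeOrbitPoly μ B j) = 0 :=
    Finset.sum_eq_zero fun j hj => by
      rw [vandermondeOrbitPoly, if_neg (not_le.2 (Finset.mem_range.1 hj)), map_zero]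
  rw [← hasSum_nat_add_iff' (delta n).degree, hlow, sub_zero]
  simp only [vandermondeOrbitPoly, le_add_iff_nonneg_left, zero_le, if_true, Nat.add_sub_cancel,
    map_mul, eval_vandermondePoly, eval_resDiag, eval_orbitPoly]
  exact (hasSum_integral_pow_exp μ (by fun_prop)).mul_left _

theorem vdmC_mul_vdmC_mul_integral_exp_trace [μ.IsMulLeftInvariant] (a b : Fin n → ℂ) :
    vdmC a * vdmC b *
        ∫ U, Complex.exp (Matrix.diagonal a * orbitPoint (Matrix.diagonal b) U).trace ∂μ =
      (∏ i : Fin n, ((i : ℕ).factorial : ℂ)) *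
        (Matrix.of fun i j => Complex.exp (b i * a j)).det := by
  have hleft := (hasSum_eval_vandermondeOrbitPoly (μ := μ) (Matrix.diagonal b) a).mul_left (vdmC b)
  have hright := (hasSum_eval_altExpPart b a).mul_left (∏ i : Fin n, ((i : ℕ).factorial : ℂ))
  simp only [← smul_eval, vdmC_eq_det b, det_vandermonde_smul_vandermondeOrbitPoly] at hleft hright
  rw [mul_right_comm, mul_comm, vdmC_eq_det b]
  exact hleft.unique hright

end UnitaryIntegral

section GaussianIntegral

theorem trace_sub_sq {ι R : Type*} [Fintype ι] [DecidableEq ι] [CommRing R] (A B : Matrix ι ι R) :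
    ((A - B) ^ 2).trace = (A ^ 2).trace + (B ^ 2).trace - 2 * (A * B).trace := by
  simp only [sq, sub_mul, mul_sub, Matrix.trace_sub, Matrix.trace_mul_comm B A]
  ring

theorem trace_unitary_conj_diagonal_sq {ι R : Type*} [Fintype ι] [DecidableEq ι] [CommRing R]
    [StarRing R] (V : Matrix.unitaryGroup ι R) (a : ι → R) :
    ((V * Matrix.diagonal a * star (V : Matrix ι ι R)) ^ 2).trace = ∑ i, a i ^ 2 := by
  have hpow : (V * Matrix.diagonal a * star (V : Matrix ι ι R)) ^ 2 =
      V * Matrix.diagonal a ^ 2 * star (V : Matrix ι ι R) :=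
    (Unitary.toUnits V).conj_pow (Matrix.diagonal a) 2
  rw [hpow, Matrix.trace_mul_cycle, Matrix.UnitaryGroup.star_mul_self, one_mul,
    Matrix.diagonal_pow, Matrix.trace_diagonal]
  rfl

variable {n : ℕ}

theorem trace_sub_orbitPoint_sq (a b : Fin n → ℂ) (U V : Matrix.unitaryGroup (Fin n) ℂ) :
    ((V * Matrix.diagonal a * star (V : Matrix (Fin n) (Fin n) ℂ) -
        orbitPoint (Matrix.diagonal b) U) ^ 2).trace =
      ∑ i, a i ^ 2 + ∑ i, b i ^ 2 -
        2 * (Matrix.diagonal a * orbitPoint (Matrix.diagonal b) (U * V)).trace := by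
  have horbit : (orbitPoint (Matrix.diagonal b) U ^ 2).trace = ∑ i, b i ^ 2 := by
    simpa [orbitPoint] using trace_unitary_conj_diagonal_sq (star U) b
  rw [trace_sub_sq, trace_unitary_conj_diagonal_sq, horbit, trace_conj_mul_orbitPoint]

theorem det_exp_neg_half_sub_sq {ι : Type*} [Fintype ι] [DecidableEq ι] (a b : ι → ℂ) :
    (Matrix.of fun i j => Complex.exp (-(1 / 2 : ℂ) * (a j - b i) ^ 2)).det =
      Complex.exp (-(1 / 2 : ℂ) * (∑ i, a i ^ 2 + ∑ i, b i ^ 2)) *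
        (Matrix.of fun i j => Complex.exp (b i * a j)).det := by
  have hentry (i j : ι) : Complex.exp (-(1 / 2 : ℂ) * (a j - b i) ^ 2) =
      Complex.exp (-(1 / 2 : ℂ) * b i ^ 2) *
        (Complex.exp (-(1 / 2 : ℂ) * a j ^ 2) * Complex.exp (b i * a j)) := by
    rw [← Complex.exp_add, ← Complex.exp_add]
    ring_nf
  have hrow := Matrix.det_mul_row (fun j => Complex.exp (-(1 / 2 : ℂ) * a j ^ 2))
    (Matrix.of fun i j => Complex.exp (b i * a j))
  have hcolumn := Matrix.det_mul_column (fun i => Complex.exp (-(1 / 2 : ℂ) * b i ^ 2))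
    (Matrix.of fun i j => Complex.exp (-(1 / 2 : ℂ) * a j ^ 2) * Complex.exp (b i * a j))
  simp only [Matrix.of_apply] at hrow hcolumn
  simp only [hentry]
  rw [hcolumn, hrow, ← Complex.exp_sum, ← Complex.exp_sum, mul_add, Complex.exp_add,
    Finset.mul_sum, Finset.mul_sum]
  ring

theorem vdmC_mul_vdmC_mul_integral_exp_neg_half_trace
    {μ : Measure (Matrix.unitaryGroup (Fin n) ℂ)} [IsProbabilityMeasure μ] [μ.IsMulLeftInvariant]
    (a b : Fin n → ℂ) (V : Matrix.unitaryGroup (Fin n) ℂ) :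
    vdmC a * vdmC b * ∫ U, Complex.exp (-(1 / 2 : ℂ) *
        ((V * Matrix.diagonal a * star (V : Matrix (Fin n) (Fin n) ℂ) -
          orbitPoint (Matrix.diagonal b) U) ^ 2).trace) ∂μ =
      (∏ i : Fin n, ((i : ℕ).factorial : ℂ)) *
        (Matrix.of fun i j => Complex.exp (-(1 / 2 : ℂ) * (a j - b i) ^ 2)).det := by
  have := isMulRightInvariant_of_isProbabilityMeasure μ
  have hexp (U : Matrix.unitaryGroup (Fin n) ℂ) : Complex.exp (-(1 / 2 : ℂ) *
      ((V * Matrix.diagonal a * star (V : Matrix (Fin n) (Fin n) ℂ) -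
        orbitPoint (Matrix.diagonal b) U) ^ 2).trace) =
      Complex.exp (-(1 / 2 : ℂ) * (∑ i, a i ^ 2 + ∑ i, b i ^ 2)) *
        Complex.exp (Matrix.diagonal a * orbitPoint (Matrix.diagonal b) (U * V)).trace := by
    rw [trace_sub_orbitPoint_sq, ← Complex.exp_add]
    ring_nf
  simp only [hexp]
  rw [integral_const_mul, integral_mul_right_eq_self fun U =>
      Complex.exp (Matrix.diagonal a * orbitPoint (Matrix.diagonal b) U).trace,
    mul_left_comm, vdmC_mul_vdmC_mul_integral_exp_trace, det_exp_neg_half_sub_sq, mul_left_comm]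

theorem integral_exp_neg_half_trace_mul_vdmC_sq
    {μ : Measure (Matrix.unitaryGroup (Fin n) ℂ)} [IsProbabilityMeasure μ] [μ.IsMulLeftInvariant]
    {a : Fin n → ℂ} (ha : Function.Injective a) (b : Fin n → ℂ)
    (V : Matrix.unitaryGroup (Fin n) ℂ) :
    ∫ U, Complex.exp (-(1 / 2 : ℂ) *
        ((V * Matrix.diagonal a * star (V : Matrix (Fin n) (Fin n) ℂ) -
          orbitPoint (Matrix.diagonal b) U) ^ 2).trace) * vdmC b ^ 2 ∂μ =
      (vdmC a)⁻¹ * (∏ i : Fin n, ((i : ℕ).factorial : ℂ)) *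
        (Matrix.of fun i j => Complex.exp (-(1 / 2 : ℂ) * (a j - b i) ^ 2)).det * vdmC b := by
  rw [integral_mul_const, mul_assoc (vdmC a)⁻¹,
    ← vdmC_mul_vdmC_mul_integral_exp_neg_half_trace a b V (μ := μ)]
  field_simp [vdmC_ne_zero ha]

end GaussianIntegral

section Symmetrization

variable {ι α : Type*} [Fintype ι] [MeasurableSpace α] {ν : Measure α} [SigmaFinite ν]

theorem measurePreserving_comp_perm (π : Equiv.Perm ι) :
    MeasurePreserving (MeasurableEquiv.arrowCongr' π.symm (MeasurableEquiv.refl α))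
      (Measure.pi fun _ => ν) (Measure.pi fun _ => ν) :=
  measurePreserving_arrowCongr' _ _ π.symm _ fun _ => MeasurePreserving.id ν

theorem integrable_comp_perm {E : Type*} [NormedAddCommGroup E] {G : (ι → α) → E}
    (hG : Integrable G (Measure.pi fun _ => ν)) (π : Equiv.Perm ι) :
    Integrable (fun b => G (b ∘ π)) (Measure.pi fun _ => ν) :=
  (measurePreserving_comp_perm π).integrable_comp_of_integrable hG

theorem integral_comp_perm {E : Type*} [NormedAddCommGroup E] [NormedSpace ℝ E] (G : (ι → α) → E)
    (π : Equiv.Perm ι) :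
    ∫ b, G (b ∘ π) ∂Measure.pi (fun _ => ν) = ∫ b, G b ∂Measure.pi (fun _ => ν) :=
  (measurePreserving_comp_perm π).integral_comp' G

/-- Expanding the determinant, every one of the `n!` permutations contributes the same integral. -/
theorem integral_det_mul_of_alternating [DecidableEq ι] {g : ι → α → ℂ} {D : (ι → α) → ℂ}
    (hD : ∀ (π : Equiv.Perm ι) (b : ι → α), D (b ∘ π) = ((Equiv.Perm.sign π : ℤ) : ℂ) * D b)
    (hint : Integrable (fun b => (∏ j, g j (b j)) * D b) (Measure.pi fun _ => ν)) :
    ∫ b, (Matrix.of fun i j => g j (b i)).det * D b ∂Measure.pi (fun _ => ν) =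
      ((Fintype.card ι).factorial : ℂ) *
        ∫ b, (∏ j, g j (b j)) * D b ∂Measure.pi (fun _ => ν) := by
  have hexpand (b : ι → α) : (Matrix.of fun i j => g j (b i)).det * D b =
      ∑ π : Equiv.Perm ι, (∏ j, g j ((b ∘ π) j)) * D (b ∘ π) := by
    rw [Matrix.det_apply', Finset.sum_mul]
    refine Finset.sum_congr rfl fun π _ => ?_
    rw [hD, ← mul_assoc, mul_comm _ (∏ j, _)]
    rfl
  simp only [hexpand]
  rw [integral_finsetSum _ fun π _ => integrable_comp_perm hint π]
  simp only [integral_comp_perm fun b => (∏ j, g j (b j)) * D b]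
  rw [Finset.sum_const, Finset.card_univ, Fintype.card_perm, nsmul_eq_mul]

end Symmetrization

theorem integral_integral_mul_of_hasCompactSupport {X Y : Type*} [TopologicalSpace X]
    [R1Space X] [CompactSpace X] [TopologicalSpace Y] [R1Space Y] [MeasurableSpace X]
    [OpensMeasurableSpace X] [MeasurableSpace Y] [OpensMeasurableSpace Y]
    {μ : Measure X} {ν : Measure Y} [IsFiniteMeasureOnCompacts μ] [IsFiniteMeasureOnCompacts ν]
    {K : X → Y → ℂ} {f : Y → ℂ}
    (hK : Continuous K.uncurry) (hf : Continuous f) (hfs : HasCompactSupport f) :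
    ∫ x, ∫ y, K x y * f y ∂ν ∂μ = ∫ y, (∫ x, K x y ∂μ) * f y ∂ν := by
  have hcont : Continuous (Function.uncurry fun x y => K x y * f y) :=
    hK.mul (hf.comp continuous_snd)
  have hsupp : HasCompactSupport (Function.uncurry fun x y => K x y * f y) :=
    HasCompactSupport.intro (isCompact_univ.prod hfs) fun p hp => by
      have hfp : f p.2 = 0 := image_eq_zero_of_notMem_tsupport fun h => hp ⟨Set.mem_univ _, h⟩
      rw [Function.uncurry, hfp, mul_zero]
  rw [integral_integral_swap_of_hasCompactSupport hcont hsupp]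
  simp only [integral_mul_const]

theorem integral_det_gaussian_mul_vdmC_mul {n : ℕ} (a : Fin n → ℂ) {f : (Fin n → ℝ) → ℂ}
    (hf : Continuous f) (hfs : HasCompactSupport f)
    (hsymm : ∀ (π : Equiv.Perm (Fin n)) (b : Fin n → ℝ), f (b ∘ π) = f b) :
    ∫ b : Fin n → ℝ, (Matrix.of fun i j => Complex.exp (-(1 / 2 : ℂ) * (a j - (b i : ℂ)) ^ 2)).det *
        ((vdmC fun i => (b i : ℂ)) * f b) =
      (n.factorial : ℂ) * ∫ b : Fin n → ℝ, Complex.exp (-(1 / 2 : ℂ) * ∑ j, (a j - (b j : ℂ)) ^ 2) *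
        ((vdmC fun i => (b i : ℂ)) * f b) := by
  have halt (π : Equiv.Perm (Fin n)) (b : Fin n → ℝ) :
      (vdmC fun i => ((b ∘ π) i : ℂ)) * f (b ∘ π) =
        ((Equiv.Perm.sign π : ℤ) : ℂ) * ((vdmC fun i => (b i : ℂ)) * f b) := by
    rw [hsymm, ← mul_assoc, ← vdmC_comp_perm]
    rfl
  have hint : Integrable fun b : Fin n → ℝ =>
      (∏ j, Complex.exp (-(1 / 2 : ℂ) * (a j - (b j : ℂ)) ^ 2)) *
        ((vdmC fun i => (b i : ℂ)) * f b) :=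
    Continuous.integrable_of_hasCompactSupport (by fun_prop) hfs.mul_left.mul_left
  have hsum (b : Fin n → ℝ) : Complex.exp (-(1 / 2 : ℂ) * ∑ j, (a j - (b j : ℂ)) ^ 2) =
      ∏ j, Complex.exp (-(1 / 2 : ℂ) * (a j - (b j : ℂ)) ^ 2) := by
    rw [Finset.mul_sum, Complex.exp_sum]
  have hdet := integral_det_mul_of_alternating
    (g := fun j (x : ℝ) => Complex.exp (-(1 / 2 : ℂ) * (a j - (x : ℂ)) ^ 2)) halt hint
  rw [Fintype.card_fin] at hdet
  simp only [hsum]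
  exact hdet

/-- The Harish-Chandra/Itzykson–Zuber formula.  Here the Haar probability measure on `U(n)`
is characterized as a left-invariant probability measure on the (compact) unitary group. -/
theorem harish_chandra_itzykson_zuber (n : ℕ) (hn : 1 ≤ n) :
    ∃ c : ℝ, 0 < c ∧
      ∀ (A : Matrix (Fin n) (Fin n) ℂ) (a : Fin n → ℂ),
        Function.Injective a →
        (∃ U ∈ Matrix.unitaryGroup (Fin n) ℂ, A = U * Matrix.diagonal a * star U) →
        ∀ μ : Measure (Matrix.unitaryGroup (Fin n) ℂ), IsProbabilityMeasure μ →
          (∀ V : Matrix.unitaryGroup (Fin n) ℂ, Measure.map (fun U => V * U) μ = μ) →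
          ∀ f : (Fin n → ℝ) → ℂ, Continuous f → HasCompactSupport f →
            (∀ σ : Equiv.Perm (Fin n), ∀ b : Fin n → ℝ, f (b ∘ σ) = f b) →
            (∫ U : Matrix.unitaryGroup (Fin n) ℂ,
                (∫ b : Fin n → ℝ,
                  Complex.exp (-(1 / 2 : ℂ) * Matrix.trace
                      ((A - star (U : Matrix (Fin n) (Fin n) ℂ) *
                          Matrix.diagonal (fun i => (b i : ℂ)) *
                          (U : Matrix (Fin n) (Fin n) ℂ)) ^ 2)) *
                    (vdmC fun i => (b i : ℂ)) ^ 2 * f b) ∂μ) =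
              (c : ℂ) *
                ∫ b : Fin n → ℝ,
                  Complex.exp (-(1 / 2 : ℂ) * ∑ j, (a j - (b j : ℂ)) ^ 2) *
                    ((vdmC fun i => (b i : ℂ)) / vdmC a) * f b := by
  refine ⟨n.factorial * ∏ i : Fin n, (i : ℕ).factorial, by positivity, ?_⟩
  rintro A a ha ⟨W, hW, rfl⟩ μ hprob hμ f hf hfs hsymm
  have hinv : μ.IsMulLeftInvariant := ⟨hμ⟩
  rw [integral_integral_mul_of_hasCompactSupport (by unfold Function.uncurry; fun_prop) hf hfs]
  have hleft (b : Fin n → ℝ) := integral_exp_neg_half_trace_mul_vdmC_sq (μ := μ) ha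
    (fun i => (b i : ℂ)) ⟨W, hW⟩
  have hright (b : Fin n → ℝ) :
      Complex.exp (-(1 / 2 : ℂ) * ∑ j, (a j - (b j : ℂ)) ^ 2) *
          ((vdmC fun i => (b i : ℂ)) / vdmC a) * f b =
        (vdmC a)⁻¹ * (Complex.exp (-(1 / 2 : ℂ) * ∑ j, (a j - (b j : ℂ)) ^ 2) *
          ((vdmC fun i => (b i : ℂ)) * f b)) := by ring
  simp only [orbitPoint] at hleft
  simp only [hleft, hright]
  simp only [mul_assoc, integral_const_mul, integral_det_gaussian_mul_vdmC_mul a hf hfs hsymm]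
  push_cast
  ring

end
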